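/- Let n, d be integers and r = 1 or r = -1 such that n + r ≥ d ≥ 3, gcd(n,d) = 1, and n ≡ -r (mod d), and let M = (dn-n-r)/d or M = n-1. Then, modulo [n]*Phi_n(q)^5, sum_{k=0}^{M} [2dk+r] ((q^r;q^d)_k^6 / (q^d;q^d)_k^6) q^{(2d-3r)k} ≡ [dn-n] q^{r(r+n-dn)/d} * ((q^{2r};q^d)_{(dn-n-r)/d} / (q^d;q^d)_{(dn-n-r)/d}) * sum_{k=0}^{(dn-n-r)/d} ((q^r;q^d)_k^3 (q^{d-r};q^d)_k q^{dk} / ((q^d;q^d)_k^3 (q^{2r};q^d)_k)) * ( 1 - [dn-n]^2 (2 - q^{dn-n}) * sum_{j=1}^{k} ( q^{dj}/[dj]^2 + q^{dj-d+r}/[dj-d+r]^2 ) ). -/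

import Mathlib

open Finset

/-- The generator `q` of the field `ℚ(q)` of rational functions. -/
noncomputable def q : RatFunc ℚ := RatFunc.X

/-- The `q`-integer `[r] = (1 - q^r)/(1 - q)`. -/
noncomputable def qint (r : ℤ) : RatFunc ℚ := (1 - q ^ r) / (1 - q)

/-- The `q`-shifted factorial `(x; b)_m = (1-x)(1-xb)⋯(1-x b^(m-1))`. -/
noncomputable def qpoch (x b : RatFunc ℚ) (m : ℕ) : RatFunc ℚ :=
  ∏ i ∈ Finset.range m, (1 - x * b ^ i)

/-- `f ≡ g (mod P)`: `f - g = P * (r/s)` with `s` coprime to `P`. -/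
def qcong (f g : RatFunc ℚ) (P : Polynomial ℚ) : Prop :=
  ∃ r s : Polynomial ℚ, IsCoprime s P ∧
    f - g = algebraMap (Polynomial ℚ) (RatFunc ℚ) P *
      (algebraMap (Polynomial ℚ) (RatFunc ℚ) r / algebraMap (Polynomial ℚ) (RatFunc ℚ) s)


section watson
variable {K : Type*} [Field K]

def pch (x p : K) (k : ℕ) : K := ∏ i ∈ Finset.range k, (1 - x * p ^ i)

theorem pch_zero (x p : K) : pch x p 0 = 1 := by simp [pch]

theorem pch_succ (x p : K) (k : ℕ) : pch x p (k+1) = pch x p k * (1 - x * p ^ k) := by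
  simp [pch, Finset.prod_range_succ]

theorem pch_succ' (x p : K) (k : ℕ) : pch x p (k+1) = (1 - x) * pch (x * p) p k := by
  simp only [pch, Finset.prod_range_succ', pow_zero, mul_one]
  rw [mul_comm]
  congr 1
  refine Finset.prod_congr rfl fun i _ => ?_
  ring

theorem inv_shift {p : K} (hp : p ≠ 0) (k : ℕ) : (p^(k+1))⁻¹ * p = (p^k)⁻¹ := by
  rw [pow_succ, mul_inv, mul_assoc, inv_mul_cancel₀ hp, mul_one]

def saT (p a b c g : K) (k j : ℕ) : K :=
  pch ((p^k)⁻¹) p j * pch (a * p^k) p j * pch g p j * p^j /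
    (pch p p j * pch (c*g) p j * pch (b*g) p j)

theorem saal_partial (p a b c g : K) (hp : p ≠ 0) (ha : a * p = b * c * g)
    (h1 : ∀ k, pch p p k ≠ 0) (h2 : ∀ k, pch (c*g) p k ≠ 0) (h3 : ∀ k, pch (b*g) p k ≠ 0)
    (k J : ℕ) :
    ∑ j ∈ range (J+1), ((1 - c*g*p^k) * (1 - b*g*p^k) * saT p a b c g (k+1) j -
      (1 - b*p^k) * (1 - c*p^k) * g * saT p a b c g k j) =
    (1 - g) * (1 - a * p^(2*k+1)) * pch ((p^k)⁻¹) p J * pch (a*p^(k+1)) p J * pch (g*p) p J /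
      (pch p p J * pch (c*g) p J * pch (b*g) p J) := by
  have ha' : a = b * c * g / p := by field_simp; exact ha
  induction J with
  | zero =>
    simp only [saT, pch_zero, zero_add, Finset.sum_range_one]
    rw [ha']; field_simp; ring
  | succ J ih =>
    rw [Finset.sum_range_succ, ih]
    have e1 : pch ((p^(k+1))⁻¹) p (J+1) = (1 - (p^(k+1))⁻¹) * pch ((p^k)⁻¹) p J := by
      rw [pch_succ', inv_shift hp]
    have e2 : pch (a*p^k) p (J+1) = (1 - a*p^k) * pch (a*p^(k+1)) p J := by
      rw [pch_succ']; congr 2; ring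
    have e3 : pch g p (J+1) = (1 - g) * pch (g*p) p J := pch_succ' _ _ _
    simp only [saT]
    rw [e1, e2, e3]
    have n1 := h1 (J+1); have n2 := h2 (J+1); have n3 := h3 (J+1)
    have m1 := h1 J; have m2 := h2 J; have m3 := h3 J
    rw [pch_succ] at n1 n2 n3
    have q1 := right_ne_zero_of_mul n1
    have q2 := right_ne_zero_of_mul n2
    have q3 := right_ne_zero_of_mul n3
    rw [pch_succ ((p^k)⁻¹), pch_succ (a*p^(k+1)), pch_succ (g*p), pch_succ p, pch_succ (c*g),
      pch_succ (b*g)]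
    generalize pch ((p^k)⁻¹) p J = x1 at *
    generalize pch (a*p^(k+1)) p J = x2 at *
    generalize pch (g*p) p J = x3 at *
    generalize pch p p J = x4 at *
    generalize pch (c*g) p J = x5 at *
    generalize pch (b*g) p J = x6 at *
    have hP : p^k ≠ 0 := pow_ne_zero _ hp
    clear h1 h2 h3 n1 n2 n3 ih e1 e2 e3
    simp only [pow_succ, pow_mul', pow_zero, one_mul, mul_inv]
    generalize p^k = P at *
    generalize p^J = Q at *
    generalize hy1 : 1 - p*Q = y1 at *
    generalize hy2 : 1 - c*g*Q = y2 at *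
    generalize hy3 : 1 - b*g*Q = y3 at *
    subst ha'
    field_simp
    subst hy1 hy2 hy3
    ring

theorem pch_neg_zero {p : K} (hp : p ≠ 0) (k j : ℕ) (h : k < j) : pch ((p^k)⁻¹) p j = 0 := by
  apply Finset.prod_eq_zero (Finset.mem_range.2 h)
  rw [inv_mul_cancel₀ (pow_ne_zero _ hp), sub_self]

theorem saal (p a b c g : K) (hp : p ≠ 0) (ha : a * p = b * c * g)
    (h1 : ∀ k, pch p p k ≠ 0) (h2 : ∀ k, pch (c*g) p k ≠ 0) (h3 : ∀ k, pch (b*g) p k ≠ 0)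
    (k m : ℕ) (hk : k ≤ m) :
    ∑ j ∈ range (m+1), saT p a b c g k j =
     pch b p k * pch c p k * g^k / (pch (c*g) p k * pch (b*g) p k) := by
  induction k with
  | zero =>
    rw [Finset.sum_eq_single 0]
    · simp [saT, pch_zero]
    · intro j _ hj
      simp only [saT]
      rw [pch_neg_zero hp 0 j (by omega)]; simp
    · simp
  | succ k ih =>
    have ih := ih (by omega)
    have := saal_partial p a b c g hp ha h1 h2 h3 k m
    rw [pch_neg_zero hp k m (by omega), Finset.sum_sub_distrib, ← Finset.mul_sum,
      ← Finset.mul_sum, ih] at this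
    have n2 := h2 (k+1); have n3 := h3 (k+1)
    have m2 := h2 k; have m3 := h3 k
    rw [pch_succ] at n2 n3
    have q2 := right_ne_zero_of_mul n2
    have q3 := right_ne_zero_of_mul n3
    simp only [mul_zero, zero_mul, zero_div] at this
    have := sub_eq_zero.1 this
    apply mul_left_cancel₀ (mul_ne_zero q2 q3)
    rw [this]
    simp only [pch_succ]
    generalize hy2 : 1 - c*g*p^k = y2 at *
    generalize hy3 : 1 - b*g*p^k = y3 at *
    field_simp
    ring

def iT (p a d e h : K) (m j k : ℕ) : K :=
  (1 - a*p^(2*k)) * pch a p k * pch d p k * pch e p k * pch ((p^m)⁻¹) p k /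
    (pch p p k * pch (e*h) p k * pch (d*h) p k * pch (a*p^(m+1)) p k) * (h*p^m)^k *
    (pch ((p^k)⁻¹) p j * pch (a*p^k) p j)

theorem i_partial (p a d e h : K) (hp : p ≠ 0) (hh : h ≠ 0) (ha : a * p = d * e * h) (m : ℕ)
    (h1 : ∀ k, pch p p k ≠ 0) (h2 : ∀ k, pch (e*h) p k ≠ 0) (h3 : ∀ k, pch (d*h) p k ≠ 0)
    (h4 : ∀ k, pch (a*p^(m+1)) p k ≠ 0)
    (j N : ℕ) :
    ∑ k ∈ range N, ((1 - d*p^j) * (1 - e*p^j) * (1 - p^j*(p^m)⁻¹) * iT p a d e h m j k -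
      (1 - p/(h*p^m)*p^j) * iT p a d e h m (j+1) k) =
    - (p/(h*p^m)*p^j) * (pch a p N * pch d p N * pch e p N * pch ((p^m)⁻¹) p N /
    (pch p p N * pch (e*h) p N * pch (d*h) p N * pch (a*p^(m+1)) p N) * (h*p^m)^N *
    (pch ((p^N)⁻¹) p (j+1) * pch (a*p^N) p j)) *
    ((1 - e*h*p^N/p) * (1 - d*h*p^N/p) * (1 - a*p^m*p^N)) := by
  have ha' : a = d * e * h / p := by field_simp; exact ha
  induction N with
  | zero =>
    rw [pch_neg_zero hp 0 (j+1) (by omega)]; simp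
  | succ k ih =>
    rw [Finset.sum_range_succ, ih]
    have e1 : pch ((p^(k+1))⁻¹) p (j+1) = (1 - (p^(k+1))⁻¹) * pch ((p^k)⁻¹) p j := by
      rw [pch_succ', inv_shift hp]
    have e2 : (1 - a*p^k) * pch (a*p^(k+1)) p j = pch (a*p^k) p j * (1 - a*p^k*p^j) := by
      rw [← pch_succ, pch_succ']; congr 2; ring
    have e3 : pch a p (k+1) * pch (a*p^(k+1)) p j = 
        pch a p k * (pch (a*p^k) p j * (1 - a*p^k*p^j)) := by
      rw [← e2, pch_succ]; ring
    have e4 : ∀ x1 x2 x3 x4 x5 x6 : K, 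
      -(p/(h*p^m)*p^j) * (pch a p (k+1) * x1 * x2 * x3 / x4 * x5 * 
        (pch ((p^(k+1))⁻¹) p (j+1) * pch (a*p^(k+1)) p j)) * x6 = 
      -(p/(h*p^m)*p^j) * (x1 * x2 * x3 / x4 * x5 * ((1 - (p^(k+1))⁻¹) * pch ((p^k)⁻¹) p j)) *
        x6 * (pch a p k * (pch (a*p^k) p j * (1 - a*p^k*p^j))) := by
      intros
      rw [← e3, e1]; ring
    rw [e4]
    simp only [iT]
    have n1 := h1 (k+1); have n2 := h2 (k+1); have n3 := h3 (k+1); have n4 := h4 (k+1)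
    have m1 := h1 k; have m2 := h2 k; have m3 := h3 k; have m4 := h4 k
    rw [pch_succ] at n1 n2 n3 n4
    have q1 := right_ne_zero_of_mul n1
    have q2 := right_ne_zero_of_mul n2
    have q3 := right_ne_zero_of_mul n3
    have q4 := right_ne_zero_of_mul n4
    rw [pch_succ p p k, pch_succ d, pch_succ e, pch_succ (e*h), pch_succ (d*h),
      pch_succ (a*p^(m+1)), pch_succ ((p^m)⁻¹) p k, pch_succ ((p^k)⁻¹) p j, pch_succ (a*p^k) p j]
    clear h1 h2 h3 h4 n1 n2 n3 n4 ih e1 e2 e3 e4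
    generalize pch ((p^k)⁻¹) p j = x1 at *
    generalize pch (a*p^k) p j = x2 at *
    generalize pch a p k = x3 at *
    generalize pch p p k = x4 at *
    generalize pch (e*h) p k = x5 at *
    generalize pch (d*h) p k = x6 at *
    generalize pch d p k = x7 at *
    generalize pch e p k = x8 at *
    generalize pch (a*p^(m+1)) p k = x9 at *
    generalize pch ((p^m)⁻¹) p k = x10 at *
    have hP : p^k ≠ 0 := pow_ne_zero _ hp
    have hM : p^m ≠ 0 := pow_ne_zero _ hp
    rw [pow_succ (h*p^m) k]
    have hz : (h*p^m)^k ≠ 0 := pow_ne_zero _ (mul_ne_zero hh hM)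
    generalize (h*p^m)^k = z at *
    rw [pow_succ p m] at q4 ⊢
    rw [pow_succ p k, mul_comm 2 k, pow_mul]
    generalize p^k = P at *
    generalize p^j = Q at *
    generalize p^m = M at *
    generalize hy1 : 1 - p*P = y1 at *
    generalize hy2 : 1 - e*h*P = y2 at *
    generalize hy3 : 1 - d*h*P = y3 at *
    generalize hy4 : 1 - a*(M*p)*P = y4 at *
    have r2 : 1 - e*h*(P*p)/p = y2 := by rw [← hy2]; field_simp
    have r3 : 1 - d*h*(P*p)/p = y3 := by rw [← hy3]; field_simp
    have r4 : 1 - a*M*(P*p) = y4 := by rw [← hy4]; ring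
    rw [r2, r3, r4]
    clear r2 r3 r4
    field_simp
    subst hy1
    subst ha'
    field_simp
    ring

theorem pch_rev (y p : K) (hy : y ≠ 0) (hp : p ≠ 0) (m : ℕ) :
    pch (p/(y*p^m)) p m * y^m * (∏ i ∈ range m, p^i) = (-1)^m * pch y p m := by
  induction m with
  | zero => simp [pch_zero]
  | succ m ih =>
    have hM : p^m ≠ 0 := pow_ne_zero _ hp
    have e1 : p/(y*p^(m+1))*p = p/(y*p^m) := by rw [pow_succ]; field_simp
    rw [pch_succ', e1, pch_succ, Finset.prod_range_succ, pow_succ, pow_succ (-1 : K)]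
    have e2 : (1 - p/(y*p^(m+1))) * y * p^m = -(1 - y*p^m) := by
      rw [pow_succ]; field_simp; ring
    linear_combination (-(1 - y*p^m)) * ih +
      pch (p/(y*p^m)) p m * y^m * (∏ i ∈ range m, p^i) * e2

theorem prod_pow_sq (p : K) (m : ℕ) : (∏ i ∈ range m, p^i)^2 * p^m = (p^m)^m := by
  induction m with
  | zero => simp
  | succ m ih =>
    rw [Finset.prod_range_succ]
    have : (p^(m+1))^(m+1) = (p^m)^m * p^m * p^(m+1) := by ring
    rw [this, ← ih]; ring

theorem i_closed (p a d e h : K) (hp : p ≠ 0) (hh : h ≠ 0) (ha : a * p = d * e * h) (m : ℕ)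
    (h1 : ∀ k, pch p p k ≠ 0) (h2 : ∀ k, pch (e*h) p k ≠ 0) (h3 : ∀ k, pch (d*h) p k ≠ 0)
    (h4 : ∀ k, pch (a*p^(m+1)) p k ≠ 0) (h5 : ∀ k, pch (p/(h*p^m)) p k ≠ 0)
    (hd : ∀ j < m, 1 - d*p^j ≠ 0) (he : ∀ j < m, 1 - e*p^j ≠ 0)
    (i j : ℕ) (hij : j + i = m) :
    ∑ k ∈ range (m+1), iT p a d e h m j k =
      (1-a) * pch (a*p) p m * pch h p m * pch d p j * pch e p j * pch ((p^m)⁻¹) p j /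
        (pch (e*h) p m * pch (d*h) p m * pch (p/(h*p^m)) p j) := by
  have hM : p^m ≠ 0 := pow_ne_zero _ hp
  induction i generalizing j with
  | zero =>
    obtain rfl : j = m := by omega
    rw [Finset.sum_eq_single j]
    · simp only [iT]
      have e1 : (1-a) * pch (a*p) p j = pch a p j * (1 - a*p^j) := by rw [← pch_succ', ← pch_succ]
      have e2 : (1 - a*p^j) * pch (a*p^(j+1)) p j = pch (a*p^j) p j * (1 - a*p^(2*j)) := by
        have : a*p^(2*j) = a*p^j*p^j := by ring
        rw [this, ← pch_succ, pch_succ', mul_assoc a, ← pow_succ]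
      have r1 := pch_rev h p hh hp j
      have r2 := pch_rev p p hp hp j
      have e3 : p/(p*p^j) = (p^j)⁻¹ := by field_simp
      rw [e3] at r2
      have r3 := prod_pow_sq p j
      have r4 : pch ((p^j)⁻¹) p j * pch (p/(h*p^j)) p j * (h*p^j)^j = pch p p j * pch h p j := by
        have hne : ((-1:K)^j) ≠ 0 := pow_ne_zero _ (by simp)
        have hs : ((-1:K)^j) * (-1)^j = 1 := by rw [← mul_pow]; simp
        rw [mul_pow, ← r3]
        linear_combination (∏ i ∈ range j, p^i) * p^j * pch ((p^j)⁻¹) p j * r1 +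
          (-1)^j * pch h p j * r2 + pch p p j * pch h p j * hs
      have n1 := h1 j
      have n2 := h2 j
      have n3 := h3 j
      have n4 := h4 j
      have n5 := h5 j
      rw [div_mul_eq_mul_div, div_mul_eq_mul_div, div_eq_div_iff
        (by simp [n1, n2, n3, n4]) (by simp [n2, n3, n5])]
      rw [e1]
      generalize pch (p/(h*p^j)) p j = z1 at *
      generalize pch ((p^j)⁻¹) p j = z2 at *
      generalize pch (a*p^(j+1)) p j = z3 at *
      generalize pch (a*p^j) p j = z4 at *
      generalize pch p p j = z5 at *
      generalize (h*p^j)^j = z6 at *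
      generalize pch h p j = z7 at *
      generalize pch a p j = z8 at *
      generalize pch d p j = z9 at *
      generalize pch e p j = z10 at *
      generalize pch (e*h) p j = z11 at *
      generalize pch (d*h) p j = z12 at *
      linear_combination (-z5*z7*z2*z8*z9*z10*z11*z12) * e2 +
        (1 - a*p^(2*j)) * z4 * z8*z9*z10*z11*z12*z2 * r4
    · intro k hk hkj
      simp only [iT]
      rw [pch_neg_zero hp k j (by have := Finset.mem_range.1 hk; omega)]; simp
    · simp
  | succ i ih =>
    have ih := ih (j+1) (by omega)
    have := i_partial p a d e h hp hh ha m h1 h2 h3 h4 j (m+1)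
    rw [pch_neg_zero hp m (m+1) (by omega), Finset.sum_sub_distrib, ← Finset.mul_sum,
      ← Finset.mul_sum, ih] at this
    simp only [mul_zero, zero_mul, zero_div] at this
    have := sub_eq_zero.1 this
    have q1 := hd j (by omega)
    have q2 := he j (by omega)
    have q3 : 1 - p^j*(p^m)⁻¹ ≠ 0 := by
      have := h1 (i+1)
      rw [pch_succ] at this
      have := right_ne_zero_of_mul this
      intro h0
      apply this
      have h0 := sub_eq_zero.1 h0
      have hJ : p^j ≠ 0 := pow_ne_zero _ hp
      have e : p^m = p^j * (p*p^i) := by rw [← hij]; ring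
      have e2 : p^m = p^j := by
        field_simp at h0; exact h0
      rw [e2] at e
      have : p^j * (1 - p*p^i) = 0 := by linear_combination e
      exact (mul_eq_zero.1 this).resolve_left hJ
    apply mul_left_cancel₀ (mul_ne_zero (mul_ne_zero q1 q2) q3)
    rw [this]
    have n5 := h5 (j+1)
    have n5' := h5 j
    rw [pch_succ] at n5
    have q5 := right_ne_zero_of_mul n5
    have n2 := h2 m
    have n3 := h3 m
    simp only [pch_succ]
    generalize 1 - p/(h*p^m)*p^j = y at *
    field_simp

theorem watson (p a b c d e g h : K) (hp : p ≠ 0) (hh : h ≠ 0) (hg : a * p = b * c * g)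
    (ha : a * p = d * e * h) (m : ℕ)
    (h1 : ∀ k, pch p p k ≠ 0) (h2 : ∀ k, pch (e*h) p k ≠ 0) (h3 : ∀ k, pch (d*h) p k ≠ 0)
    (h4 : ∀ k, pch (a*p^(m+1)) p k ≠ 0) (h5 : ∀ k, pch (p/(h*p^m)) p k ≠ 0)
    (h6 : ∀ k, pch (c*g) p k ≠ 0) (h7 : ∀ k, pch (b*g) p k ≠ 0)
    (hd : ∀ j < m, 1 - d*p^j ≠ 0) (he : ∀ j < m, 1 - e*p^j ≠ 0) :
    ∑ k ∈ range (m+1), (1 - a*p^(2*k)) * (pch a p k / pch p p k) * (pch b p k / pch (c*g) p k) *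
      (pch c p k / pch (b*g) p k) * (pch d p k / pch (e*h) p k) * (pch e p k / pch (d*h) p k) *
      (pch ((p^m)⁻¹) p k / pch (a*p^(m+1)) p k) * (g*h*p^m)^k =
    (1-a) * pch (a*p) p m * pch h p m / (pch (e*h) p m * pch (d*h) p m) *
    ∑ j ∈ range (m+1), pch g p j * pch d p j * pch e p j * pch ((p^m)⁻¹) p j * p^j /
      (pch p p j * pch (c*g) p j * pch (b*g) p j * pch (p/(h*p^m)) p j) := by
  have L : ∀ k ∈ range (m+1), (1 - a*p^(2*k)) * (pch a p k / pch p p k) *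
      (pch b p k / pch (c*g) p k) *
      (pch c p k / pch (b*g) p k) * (pch d p k / pch (e*h) p k) * (pch e p k / pch (d*h) p k) *
      (pch ((p^m)⁻¹) p k / pch (a*p^(m+1)) p k) * (g*h*p^m)^k =
      ∑ j ∈ range (m+1), (pch g p j * p^j / (pch p p j * pch (c*g) p j * pch (b*g) p j)) *
        iT p a d e h m j k := by
    intro k hk
    have := saal p a b c g hp hg h1 h6 h7 k m (by have := Finset.mem_range.1 hk; omega)
    have e0 : (g*h*p^m)^k = g^k * (h*p^m)^k := by rw [← mul_pow]; ring
    rw [e0]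
    trans (pch b p k * pch c p k * g^k / (pch (c*g) p k * pch (b*g) p k)) *
      ((1 - a*p^(2*k)) * pch a p k * pch d p k * pch e p k * pch ((p^m)⁻¹) p k /
    (pch p p k * pch (e*h) p k * pch (d*h) p k * pch (a*p^(m+1)) p k) * (h*p^m)^k)
    · simp only [div_eq_mul_inv, mul_inv]; ring
    rw [← this, Finset.sum_mul]
    refine Finset.sum_congr rfl fun j _ => ?_
    simp only [saT, iT, div_eq_mul_inv]
    ring
  rw [Finset.sum_congr rfl L, Finset.sum_comm, Finset.mul_sum]
  refine Finset.sum_congr rfl fun j hj => ?_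
  have hj := Finset.mem_range.1 hj
  rw [← Finset.mul_sum, i_closed p a d e h hp hh ha m h1 h2 h3 h4 h5 hd he (m-j) j (by omega)]
  simp only [div_eq_mul_inv, mul_inv]
  ring
end watson

section vals
open Polynomial

noncomputable abbrev am : ℚ[X] → RatFunc ℚ := algebraMap ℚ[X] (RatFunc ℚ)

/-- valuation at `Phi_m` at least `e` -/
def DV (m : ℕ) (e : ℤ) (f : RatFunc ℚ) : Prop :=
  ∃ a s : ℚ[X], IsCoprime s (cyclotomic m ℚ) ∧ s ≠ 0 ∧
    f = am (cyclotomic m ℚ) ^ e * (am a / am s)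

/-- valuation at `Phi_m` exactly `e` -/
def EX (m : ℕ) (e : ℤ) (f : RatFunc ℚ) : Prop :=
  ∃ a s : ℚ[X], IsCoprime a (cyclotomic m ℚ) ∧ a ≠ 0 ∧ IsCoprime s (cyclotomic m ℚ) ∧ s ≠ 0 ∧
    f = am (cyclotomic m ℚ) ^ e * (am a / am s)

theorem am_ne {a : ℚ[X]} (h : a ≠ 0) : am a ≠ 0 := by
  simpa [am] using h

theorem cyc_ne (m : ℕ) : am (cyclotomic m ℚ) ≠ 0 := am_ne (cyclotomic_ne_zero m ℚ)

variable {m : ℕ} {e e1 e2 : ℤ} {f g f' g' : RatFunc ℚ}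

theorem DV.zero (m : ℕ) (e : ℤ) : DV m e 0 := ⟨0, 1, isCoprime_one_left, one_ne_zero, by simp⟩

theorem DV.mono (h : DV m e1 f) (he : e ≤ e1) : DV m e f := by
  obtain ⟨a, s, hs, hs0, rfl⟩ := h
  obtain ⟨k, hk⟩ := Int.eq_ofNat_of_zero_le (sub_nonneg.2 he)
  obtain rfl : e1 = e + k := by omega
  refine ⟨cyclotomic m ℚ ^ k * a, s, hs, hs0, ?_⟩
  rw [zpow_add₀ (cyc_ne m), zpow_natCast]
  simp only [am, map_mul, map_pow]
  ring

theorem DV.add (h1 : DV m e f) (h2 : DV m e g) : DV m e (f + g) := by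
  obtain ⟨a, s, hs, hs0, rfl⟩ := h1
  obtain ⟨b, t, ht, ht0, rfl⟩ := h2
  refine ⟨a * t + b * s, s * t, hs.mul_left ht, mul_ne_zero hs0 ht0, ?_⟩
  have := am_ne hs0
  have := am_ne ht0
  simp only [am, map_mul, map_add] at *
  field_simp

theorem DV.neg (h1 : DV m e f) : DV m e (-f) := by
  obtain ⟨a, s, hs, hs0, rfl⟩ := h1
  refine ⟨-a, s, hs, hs0, ?_⟩
  simp only [am, map_neg]; ring

theorem DV.sub (h1 : DV m e f) (h2 : DV m e g) : DV m e (f - g) := by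
  rw [sub_eq_add_neg]; exact h1.add h2.neg

theorem DV.mul' (h1 : DV m e1 f) (h2 : DV m e2 g) : DV m (e1 + e2) (f * g) := by
  obtain ⟨a, s, hs, hs0, rfl⟩ := h1
  obtain ⟨b, t, ht, ht0, rfl⟩ := h2
  refine ⟨a * b, s * t, hs.mul_left ht, mul_ne_zero hs0 ht0, ?_⟩
  rw [zpow_add₀ (cyc_ne m)]
  simp only [am, map_mul, div_eq_mul_inv, mul_inv]
  ring

theorem DV.mul (h1 : DV m e1 f) (h2 : DV m e2 g) (he : e ≤ e1 + e2) : DV m e (f * g) :=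
  (h1.mul' h2).mono he

theorem z00 : (0:ℤ) ≤ 0 + 0 := by norm_num

theorem DV.mul0 (h1 : DV m 0 f) (h2 : DV m 0 g) : DV m 0 (f * g) := h1.mul h2 z00

theorem DV.one (m : ℕ) : DV m 0 1 := ⟨1, 1, isCoprime_one_left, one_ne_zero, by simp [am]⟩

theorem DV.sum {ι : Type*} (s : Finset ι) (F : ι → RatFunc ℚ) (h : ∀ i ∈ s, DV m e (F i)) :
    DV m e (∑ i ∈ s, F i) := by
  classical
  induction s using Finset.induction_on with
  | empty => simpa using DV.zero m e
  | insert a s ha ih =>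
    rw [Finset.sum_insert ha]
    exact (h a (by simp)).add (ih fun i hi => h i (by simp [hi]))

theorem DV.pow (h : DV m e f) (k : ℕ) : DV m (k * e) (f ^ k) := by
  induction k with
  | zero => simpa using DV.one m
  | succ k ih => rw [pow_succ]; exact ih.mul h (by push_cast; linarith)

theorem DV.pow0 (h : DV m 0 f) (k : ℕ) : DV m 0 (f ^ k) := by simpa using h.pow k

theorem EX.dv (h : EX m e1 f) (he : e ≤ e1) : DV m e f := by
  obtain ⟨a, s, _, _, hs, hs0, rfl⟩ := h
  exact DV.mono ⟨a, s, hs, hs0, rfl⟩ he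

theorem EX.ne (h : EX m e f) : f ≠ 0 := by
  obtain ⟨a, s, _, ha0, hs, hs0, rfl⟩ := h
  exact mul_ne_zero (zpow_ne_zero _ (cyc_ne m)) (div_ne_zero (am_ne ha0) (am_ne hs0))

theorem EX.mul (h1 : EX m e1 f) (h2 : EX m e2 g) : EX m (e1 + e2) (f * g) := by
  obtain ⟨a, s, ha, ha0, hs, hs0, rfl⟩ := h1
  obtain ⟨b, t, hb, hb0, ht, ht0, rfl⟩ := h2
  refine ⟨a * b, s * t, ha.mul_left hb, mul_ne_zero ha0 hb0, hs.mul_left ht,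
    mul_ne_zero hs0 ht0, ?_⟩
  rw [zpow_add₀ (cyc_ne m)]
  simp only [am, map_mul, div_eq_mul_inv, mul_inv]
  ring

theorem EX.inv (h1 : EX m e f) : EX m (-e) f⁻¹ := by
  obtain ⟨a, s, ha, ha0, hs, hs0, rfl⟩ := h1
  refine ⟨s, a, hs, hs0, ha, ha0, ?_⟩
  rw [mul_inv, inv_div, zpow_neg]

theorem EX.div (h1 : EX m e1 f) (h2 : EX m e2 g) : EX m (e1 - e2) (f / g) := by
  rw [div_eq_mul_inv, sub_eq_add_neg]; exact h1.mul h2.inv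

theorem EX.one (m : ℕ) : EX m 0 1 :=
  ⟨1, 1, isCoprime_one_left, one_ne_zero, isCoprime_one_left, one_ne_zero, by simp [am]⟩

theorem EX.neg (h1 : EX m e f) : EX m e (-f) := by
  obtain ⟨a, s, ha, ha0, hs, hs0, rfl⟩ := h1
  refine ⟨-a, s, ha.neg_left, neg_ne_zero.2 ha0, hs, hs0, ?_⟩
  simp only [am, map_neg]; ring

theorem EX.pow (h : EX m e f) (k : ℕ) : EX m (k * e) (f ^ k) := by
  induction k with
  | zero => simpa using EX.one m
  | succ k ih =>
    rw [pow_succ]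
    have := ih.mul h
    convert this using 1
    push_cast; ring

theorem EX.zpow0 (h : EX m 0 f) (k : ℤ) : EX m 0 (f ^ k) := by
  cases k with
  | ofNat k => simpa using h.pow k
  | negSucc k => simpa using (h.pow (k+1)).inv

theorem EX.prod {ι : Type*} (s : Finset ι) (F : ι → RatFunc ℚ) (E : ι → ℤ)
    (h : ∀ i ∈ s, EX m (E i) (F i)) :
    EX m (∑ i ∈ s, E i) (∏ i ∈ s, F i) := by
  classical
  induction s using Finset.induction_on with
  | empty => simpa using EX.one m
  | insert a s ha ih =>
    rw [Finset.prod_insert ha, Finset.sum_insert ha]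
    exact (h a (by simp)).mul (ih fun i hi => h i (by simp [hi]))

/-- congruence mod `Phi_m ^ e` -/
def Cg (m : ℕ) (e : ℤ) (f g : RatFunc ℚ) : Prop := DV m e (f - g)

theorem Cg.refl (m : ℕ) (e : ℤ) (f : RatFunc ℚ) : Cg m e f f := by
  simpa [Cg] using DV.zero m e

theorem Cg.symm (h : Cg m e f g) : Cg m e g f := by
  have := DV.neg h
  simpa [Cg] using this

theorem Cg.trans {k : RatFunc ℚ} (h : Cg m e f g) (h' : Cg m e g k) : Cg m e f k := by
  have := DV.add h h'
  simpa [Cg] using this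

theorem Cg.add (h : Cg m e f f') (h' : Cg m e g g') : Cg m e (f + g) (f' + g') := by
  have := DV.add h h'
  unfold Cg; convert this using 1; ring

theorem Cg.sub (h : Cg m e f f') (h' : Cg m e g g') : Cg m e (f - g) (f' - g') := by
  have := DV.sub h h'
  unfold Cg; convert this using 1; ring

theorem Cg.mul (h : Cg m e f f') (h' : Cg m e g g') (hf : DV m 0 f) (hg : DV m 0 g') :
    Cg m e (f * g) (f' * g') := by
  have := DV.add (hf.mul h' (le_of_eq (zero_add e).symm)) (DV.mul (show DV m e (f - f') from h) hg (le_of_eq (add_zero e).symm))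
  unfold Cg; convert this using 1; ring

theorem Cg.dv (h : Cg m e f g) (hg : DV m e g) : DV m e f := by
  have := DV.add h hg
  simpa using this

theorem Cg.mono (h : Cg m e1 f g) (he : e ≤ e1) : Cg m e f g := DV.mono h he

theorem Cg.dv0 (h : Cg m e f g) (he : 0 ≤ e) (hg : DV m 0 g) : DV m 0 f := (h.mono he).dv hg

theorem Cg.pow (h : Cg m e f f') (hf : DV m 0 f) (hf' : DV m 0 f') (k : ℕ) :
    Cg m e (f ^ k) (f' ^ k) := by
  induction k with
  | zero => simpa using Cg.refl m e 1
  | succ k ih => rw [pow_succ, pow_succ]; exact ih.mul h (hf.pow0 k) hf'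

theorem Cg.sum {ι : Type*} (s : Finset ι) (F G : ι → RatFunc ℚ) (h : ∀ i ∈ s, Cg m e (F i) (G i)) :
    Cg m e (∑ i ∈ s, F i) (∑ i ∈ s, G i) := by
  unfold Cg
  rw [← Finset.sum_sub_distrib]
  exact DV.sum s _ h

theorem EX_q (hm : 0 < m) : EX m 0 q := by
  refine ⟨X, 1, ?_, X_ne_zero, isCoprime_one_left, one_ne_zero, by simp [q, am]⟩
  have h1 : IsCoprime (X : ℚ[X]) (X ^ m - 1) := by
    obtain ⟨k, rfl⟩ : ∃ k, m = k + 1 := ⟨m - 1, by omega⟩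
    exact ⟨X ^ k, -1, by ring⟩
  exact h1.of_isCoprime_of_dvd_right (cyclotomic.dvd_X_pow_sub_one m ℚ)

theorem q_ne : q ≠ 0 := RatFunc.X_ne_zero

theorem EX_qz (hm : 0 < m) (s : ℤ) : EX m 0 (q ^ s) := (EX_q hm).zpow0 s

theorem EX_one_sub_nat (m : ℕ) (hm : 0 < m) (s : ℕ) (hs : 0 < s) :
    EX m (if m ∣ s then 1 else 0) (1 - q ^ s) := by
  have key : (1 - q ^ s : RatFunc ℚ) = - am (∏ i ∈ s.divisors, cyclotomic i ℚ) := by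
    rw [prod_cyclotomic_eq_X_pow_sub_one hs]; simp [q, am]
  rw [key]
  have ne : ∀ S : Finset ℕ, ∏ i ∈ S, cyclotomic i ℚ ≠ 0 :=
    fun S => Finset.prod_ne_zero_iff.2 fun i _ => cyclotomic_ne_zero i ℚ
  apply EX.neg
  split_ifs with h
  · refine ⟨∏ i ∈ s.divisors.erase m, cyclotomic i ℚ, 1, ?_, ne _, isCoprime_one_left,
      one_ne_zero, ?_⟩
    · apply IsCoprime.prod_left
      intro i hi
      exact cyclotomic.isCoprime_rat (Finset.ne_of_mem_erase hi)
    · rw [← Finset.mul_prod_erase s.divisors _ (Nat.mem_divisors.2 ⟨h, hs.ne'⟩)]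
      simp [am]
  · refine ⟨∏ i ∈ s.divisors, cyclotomic i ℚ, 1, ?_, ne _, isCoprime_one_left,
      one_ne_zero, by simp [am]⟩
    apply IsCoprime.prod_left
    intro i hi
    apply cyclotomic.isCoprime_rat
    rintro rfl
    exact h (Nat.dvd_of_mem_divisors hi)

theorem EX_one_sub (m : ℕ) (hm : 0 < m) (s : ℤ) (hs : s ≠ 0) :
    EX m (if (m:ℤ) ∣ s then 1 else 0) (1 - q ^ s) := by
  rcases Int.natAbs_eq s with h | h
  · have := EX_one_sub_nat m hm s.natAbs (by omega)
    have h3 : ((m:ℤ) ∣ s) ↔ m ∣ s.natAbs := Int.natCast_dvd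
    simp only [h3]
    have e : (q ^ s : RatFunc ℚ) = q ^ s.natAbs := by
      rw [← zpow_natCast, ← h]
    rw [e]; exact this
  · have := EX_one_sub_nat m hm s.natAbs (by omega)
    have e : (1 - q ^ s : RatFunc ℚ) = -(q ^ s * (1 - q ^ s.natAbs)) := by
      rw [← zpow_natCast, mul_sub, ← zpow_add₀ q_ne]
      have : s + (s.natAbs : ℤ) = 0 := by omega
      rw [this]; simp
    rw [e]
    have h3 : ((m:ℤ) ∣ s) ↔ m ∣ s.natAbs := Int.natCast_dvd
    simp only [h3]
    have := ((EX_qz hm s).mul this).neg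
    simpa using this

theorem EX_unit (hm : 0 < m) (s : ℤ) (hs : ¬ (m:ℤ) ∣ s) : EX m 0 (1 - q ^ s) := by
  have := EX_one_sub m hm s (by rintro rfl; simp at hs)
  simpa [hs] using this

theorem DV_one_sub (hm : 0 < m) (s : ℤ) (hs : (m:ℤ) ∣ s) : DV m 1 (1 - q ^ s) := by
  by_cases h : s = 0
  · subst h; simpa using DV.zero m 1
  · have := EX_one_sub m hm s h
    simp only [hs, if_true] at this
    exact this.dv le_rfl

theorem Cg_zpow (hm : 0 < m) (s t : ℤ) (h : (m:ℤ) ∣ s - t) : Cg m 1 (q ^ s) (q ^ t) := by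
  have := (((EX_qz hm t).dv le_rfl).mul (DV_one_sub hm _ h) (by norm_num : (1:ℤ) ≤ 0 + 1)).neg
  unfold Cg
  convert this using 1
  rw [mul_sub, ← zpow_add₀ q_ne]
  simp

theorem EX_two (m : ℕ) : EX m 0 2 := by
  have h : IsCoprime (C (2:ℚ)) (cyclotomic m ℚ) := by
    refine ⟨C (1/2), 0, ?_⟩
    rw [← C_mul]; simp
  refine ⟨C 2, 1, h, by simp, isCoprime_one_left, one_ne_zero, ?_⟩
  simp [am]

theorem dvd_num {k : ℕ} (h : DV m k f) : cyclotomic m ℚ ^ k ∣ f.num := by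
  obtain ⟨a, s, hs, hs0, hf⟩ := h
  have h1 := RatFunc.num_div_denom f
  have h2 : am f.denom ≠ 0 := am_ne (RatFunc.denom_ne_zero f)
  have h3 := am_ne hs0
  have : am (f.num * s) = am (cyclotomic m ℚ ^ k * (a * f.denom)) := by
    rw [zpow_natCast] at hf
    replace h1 := h1.trans hf
    clear hf
    simp only [am, map_mul, map_pow] at *
    field_simp at h1
    linear_combination h1
  have := RatFunc.algebraMap_injective ℚ this
  refine (IsCoprime.pow_left hs.symm).dvd_of_dvd_mul_right ?_
  rw [this]; exact Dvd.intro _ rfl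

theorem combine (n : ℕ) (hn : 1 < n) (f g : RatFunc ℚ) (h1 : DV n 6 (f - g))
    (h2 : ∀ m, m ∣ n → 1 < m → m < n → DV m 1 (f - g)) :
    qcong f g ((∑ i ∈ Finset.range n, Polynomial.X ^ i) * Polynomial.cyclotomic n ℚ ^ 5) := by
  have e1 := prod_cyclotomic_eq_geom_sum (R := ℚ) (n := n) (by omega)
  have e2 : (∑ i ∈ Finset.range n, (X : ℚ[X]) ^ i) * cyclotomic n ℚ ^ 5 =
      ∏ i ∈ n.divisors.erase 1, cyclotomic i ℚ ^ (if i = n then 6 else 1) := by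
    have hmem : n ∈ n.divisors.erase 1 := by simp; omega
    rw [← e1, ← Finset.mul_prod_erase _ _ hmem, ← Finset.mul_prod_erase _ _ hmem]
    have : ∏ i ∈ (n.divisors.erase 1).erase n, cyclotomic i ℚ ^ (if i = n then 6 else 1) =
      ∏ i ∈ (n.divisors.erase 1).erase n, cyclotomic i ℚ := by
      refine Finset.prod_congr rfl fun i hi => ?_
      simp [Finset.ne_of_mem_erase hi]
    rw [this]; simp; ring
  have hdvd : (∑ i ∈ Finset.range n, (X : ℚ[X]) ^ i) * cyclotomic n ℚ ^ 5 ∣ (f - g).num := by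
    rw [e2]
    apply Finset.prod_dvd_of_coprime
    · intro i _ j _ hij
      exact IsCoprime.pow (cyclotomic.isCoprime_rat hij)
    · intro i hi
      have hi1 := Finset.mem_erase.1 hi
      have hi2 := Nat.dvd_of_mem_divisors hi1.2
      have hi3 := Nat.le_of_dvd (by omega) hi2
      have hi4 : 0 < i := Nat.pos_of_dvd_of_pos hi2 (by omega)
      split_ifs with h
      · subst h; exact dvd_num (k := 6) h1
      · exact dvd_num (k := 1) (h2 i hi2 (by omega) (by omega))
  obtain ⟨r, hr⟩ := hdvd
  refine ⟨r, (f - g).denom, ?_, ?_⟩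
  · have := (RatFunc.isCoprime_num_denom (f - g)).symm
    exact this.of_isCoprime_of_dvd_right ⟨r, hr⟩
  · have := RatFunc.num_div_denom (f - g)
    rw [← mul_div_assoc, ← map_mul, ← hr, this]
end vals

section ph

theorem dveq {a b c : ℤ} (h : a ∣ b) (e : b = c) : a ∣ c := e ▸ h

noncomputable def PH (d : ℕ) (α : ℤ) (k : ℕ) : RatFunc ℚ := ∏ i ∈ range k, (1 - q ^ (α + d * i))

theorem qpoch_eq (d : ℕ) (α : ℤ) (k : ℕ) : qpoch (q ^ α) (q ^ d) k = PH d α k := by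
  unfold qpoch PH
  refine Finset.prod_congr rfl fun i _ => ?_
  rw [zpow_add₀ q_ne, ← pow_mul, ← zpow_natCast q (d * i)]
  push_cast; rfl

theorem pch_eq (d : ℕ) (α : ℤ) (k : ℕ) : pch (q ^ α) (q ^ d) k = PH d α k := qpoch_eq d α k

theorem PH_zero (d : ℕ) (α : ℤ) : PH d α 0 = 1 := by simp [PH]

theorem PH_succ (d : ℕ) (α : ℤ) (k : ℕ) : PH d α (k+1) = PH d α k * (1 - q ^ (α + d * k)) := by
  simp [PH, Finset.prod_range_succ]

theorem EX_PH_unit {m d : ℕ} (hm : 0 < m) (α : ℤ) (k : ℕ)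
    (h : ∀ i < k, ¬ (m:ℤ) ∣ α + d * i) : EX m 0 (PH d α k) := by
  have := EX.prod (m := m) (range k) (fun i => 1 - q ^ (α + d * i)) (fun _ => 0)
    (fun i hi => EX_unit hm _ (h i (Finset.mem_range.1 hi)))
  simpa [PH] using this

theorem EX_PH {m d : ℕ} (hm : 0 < m) (hmd : Nat.Coprime m d) (α : ℤ) (hα : ∀ i : ℕ, α + d * i ≠ 0)
    (v : ℕ) (hv : v < m) (hdv : (m:ℤ) ∣ α + d * v) (k : ℕ) :
    EX m (((k / m : ℕ) : ℤ) + if v < k % m then 1 else 0) (PH d α k) := by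
  have := EX.prod (m := m) (range k) (fun i => 1 - q ^ (α + d * i))
    (fun i => if (m:ℤ) ∣ α + d * i then 1 else 0)
    (fun i _ => EX_one_sub m hm _ (hα i))
  unfold PH
  convert this using 1
  have h1 := Nat.count_modEq_card k hm v
  rw [Nat.mod_eq_of_lt hv] at h1
  have h2 : ∀ i : ℕ, (m:ℤ) ∣ α + d * i ↔ i ≡ v [MOD m] := by
    intro i
    rw [← Int.natCast_modEq_iff, Int.modEq_iff_dvd]
    have e : (d:ℤ) * (v - i) = (α + d * v) - (α + d * i) := by ring
    constructor
    · intro h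
      have h3 : (m:ℤ) ∣ d * ((v:ℤ) - i) := by rw [e]; exact dvd_sub hdv h
      exact (Nat.isCoprime_iff_coprime.2 hmd).dvd_of_dvd_mul_left h3
    · intro h
      have h3 : (m:ℤ) ∣ d * ((v:ℤ) - i) := Dvd.dvd.mul_left h _
      rw [e] at h3
      have := dvd_sub hdv h3
      exact dveq this (by ring)
  simp only [h2]
  rw [Finset.sum_boole, ← Nat.count_eq_card_filter_range, h1]
  push_cast
  rfl

variable {m d a : ℕ} {r : ℤ}

/-- index set-up -/
structure Setup (m d a : ℕ) (r : ℤ) : Prop where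
  hm : 1 < m
  cop : Nat.Coprime m d
  ha : a < m
  hdvd : (m:ℤ) ∣ d * a + r

theorem Setup.pos (S : Setup m d a r) : 0 < m := by have := S.hm; omega

theorem Setup.nd (S : Setup m d a r) (x : ℤ) (h0 : x ≠ 0) (h1 : -m < x) (h2 : x < m) :
    ¬ (m:ℤ) ∣ d * x := by
  intro h
  have h3 := (Nat.isCoprime_iff_coprime.2 S.cop).dvd_of_dvd_mul_left h
  obtain ⟨c, hc⟩ := h3
  have hm := S.pos
  have : c = 0 := by
    by_contra hne
    rcases lt_or_gt_of_ne hne with h | h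
    · have : c ≤ -1 := by omega
      nlinarith
    · have : 1 ≤ c := by omega
      nlinarith
  subst this
  simp at hc; exact h0 hc

theorem Setup.u1 (S : Setup m d a r) {α : ℤ} (hα : (m:ℤ) ∣ α - r) {i : ℕ} (hi : i < m)
    (hia : i ≠ a) : ¬ (m:ℤ) ∣ α + d * i := by
  intro h
  have := dvd_sub (dvd_sub h S.hdvd) hα
  have e : α + d * i - (d * a + r) - (α - r) = d * ((i:ℤ) - a) := by ring
  rw [e] at this
  have := S.ha
  exact S.nd ((i:ℤ) - a) (by omega) (by omega) (by omega) (by assumption)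

theorem Setup.u2 (S : Setup m d a r) {α : ℤ} (hα : (m:ℤ) ∣ α - d) {i : ℕ} (hi : i + 1 < m) :
    ¬ (m:ℤ) ∣ α + d * i := by
  intro h
  have := dvd_sub h hα
  have e : α + d * i - (α - d) = d * ((i:ℤ) + 1) := by ring
  rw [e] at this
  exact S.nd ((i:ℤ) + 1) (by omega) (by omega) (by omega) this

theorem Setup.ex1 (S : Setup m d a r) {α : ℤ} (hα : (m:ℤ) ∣ α - r) {k : ℕ} (hk : k ≤ a) :
    EX m 0 (PH d α k) :=
  EX_PH_unit S.pos α k fun i hi => S.u1 hα (by have := S.ha; omega) (by omega)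

theorem Setup.ex2 (S : Setup m d a r) {α : ℤ} (hα : (m:ℤ) ∣ α - d) {k : ℕ} (hk : k < m) :
    EX m 0 (PH d α k) :=
  EX_PH_unit S.pos α k fun i hi => S.u2 hα (by omega)

noncomputable def tt (d : ℕ) (r : ℤ) (k : ℕ) : RatFunc ℚ := PH d r k / PH d d k

noncomputable def tau (d : ℕ) (r : ℤ) (k : ℕ) : RatFunc ℚ :=
  qint (2 * d * k + r) * tt d r k ^ 6 * q ^ ((2 * (d : ℤ) - 3 * r) * k)

theorem tt_succ (d : ℕ) (r : ℤ) (k : ℕ) :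
    tt d r (k+1) = tt d r k * ((1 - q ^ (r + d * k)) / (1 - q ^ ((d:ℤ) + d * k))) := by
  simp only [tt, PH_succ, div_eq_mul_inv, mul_inv]; ring

theorem tt_zero (d : ℕ) (r : ℤ) : tt d r 0 = 1 := by simp [tt, PH_zero]

theorem Setup.tt_ex (S : Setup m d a r) {k : ℕ} (hk : k ≤ a) : EX m 0 (tt d r k) := by
  have := (S.ex1 (α := r) (by simp) hk).div (S.ex2 (α := d) (by simp) (lt_of_le_of_lt hk S.ha))
  simpa [tt] using this

theorem Cg_div {f g f' g' : RatFunc ℚ} (h1 : Cg m 1 f f') (h2 : Cg m 1 g g')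
    (hf : DV m 0 f') (hg : EX m 0 g) (hg' : EX m 0 g') : Cg m 1 (f / g) (f' / g') := by
  have e : f / g - f' / g' = ((f - f') * g' - f' * (g - g')) * (g⁻¹ * g'⁻¹) := by
    have := hg.ne
    have := hg'.ne
    field_simp
    ring
  unfold Cg
  rw [e]
  refine DV.mul (e1 := 1) (e2 := 0) (DV.sub ?_ ?_) ?_ (by norm_num)
  · exact DV.mul h1 (hg'.dv le_rfl) (by norm_num)
  · exact DV.mul hf h2 (by norm_num)
  · exact DV.mul (hg.inv.dv le_rfl) (hg'.inv.dv le_rfl) (by norm_num)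

theorem Cg_one_sub (hm : 0 < m) (s t : ℤ) (h : (m:ℤ) ∣ s - t) :
    Cg m 1 (1 - q ^ s) (1 - q ^ t) := (Cg.refl m 1 1).sub (Cg_zpow hm s t h)

theorem dvq (hm : 0 < m) (s : ℤ) : DV m 0 (q ^ s) := (EX_qz hm s).dv le_rfl

theorem dv1q (hm : 0 < m) (s : ℤ) : DV m 0 (1 - q ^ s) := (DV.one m).sub (dvq hm s)

theorem one_sub_neg (s : ℤ) : (1 - q ^ (-s) : RatFunc ℚ) = - (q ^ (-s) * (1 - q ^ s)) := by
  rw [mul_sub, ← zpow_add₀ q_ne]; simp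

theorem Setup.tt_symm (S : Setup m d a r) {k : ℕ} (hk : k ≤ a) :
    Cg m 1 (tt d r (a - k)) (q ^ (((d:ℤ) - r) * k) * tt d r k * tt d r a) := by
  have hm := S.pos
  have ham := S.ha
  induction k with
  | zero => simpa [tt_zero] using Cg.refl m 1 _
  | succ k ih =>
    have ih := ih (by omega)
    obtain ⟨b, rfl⟩ : ∃ b, a = k + 1 + b := ⟨a - (k+1), by omega⟩
    have e1 : k + 1 + b - k = b + 1 := by omega
    have e2 : k + 1 + b - (k + 1) = b := by omega
    rw [e1, tt_succ] at ih
    rw [e2, tt_succ]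
    have n1 : EX m 0 (1 - q ^ (r + d * b)) := EX_unit hm _ (S.u1 (by simp) (by omega) (by omega))
    have n2 : EX m 0 (1 - q ^ ((d:ℤ) + d * b)) := EX_unit hm _ (S.u2 (by simp) (by omega))
    have n3 : EX m 0 (1 - q ^ (r + d * k)) := EX_unit hm _ (S.u1 (by simp) (by omega) (by omega))
    have n4 : EX m 0 (1 - q ^ ((d:ℤ) + d * k)) := EX_unit hm _ (S.u2 (by simp) (by omega))
    have hdv := S.hdvd
    push_cast at hdv
    have n5 : EX m 0 (1 - q ^ (-((d:ℤ) + d * k))) := by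
      rw [one_sub_neg]
      simpa using ((EX_qz hm (-((d:ℤ) + d * k))).mul n4).neg
    have c1 : Cg m 1 ((1 - q ^ ((d:ℤ) + d * b)) / (1 - q ^ (r + d * b)))
      ((1 - q ^ (-(r + d * k))) / (1 - q ^ (-((d:ℤ) + d * k)))) := by
      refine Cg_div (Cg_one_sub hm _ _ ?_) (Cg_one_sub hm _ _ ?_) (dv1q hm _) n1 n5
      · convert hdv using 1; ring
      · convert hdv using 1; ring
    have e3 : ((1 - q ^ (-(r + d * k))) / (1 - q ^ (-((d:ℤ) + d * k))) : RatFunc ℚ) =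
        q ^ ((d:ℤ) - r) * ((1 - q ^ (r + d * k)) / (1 - q ^ ((d:ℤ) + d * k))) := by
      rw [one_sub_neg, one_sub_neg, neg_div_neg_eq]
      have : (q ^ (-(r + d * k)) : RatFunc ℚ) = q ^ ((d:ℤ) - r) * q ^ (-((d:ℤ) + d * k)) := by
        rw [← zpow_add₀ q_ne]; congr 1; ring
      rw [this]
      have := n4.ne
      have := zpow_ne_zero (-((d:ℤ) + d * k)) q_ne
      field_simp
    rw [e3] at c1
    have d1 : DV m 0 ((1 - q ^ ((d:ℤ) + d * b)) / (1 - q ^ (r + d * b))) :=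
      (n2.div n1).dv (by norm_num)
    have d2 : DV m 0 (q ^ (((d:ℤ) - r) * k) * tt d r k * tt d r (k + 1 + b)) :=
      (((dvq hm _).mul ((S.tt_ex (k := k) (by omega)).dv le_rfl) z00).mul
        ((S.tt_ex (k := k + 1 + b) le_rfl).dv le_rfl) z00)
    have := c1.mul ih d1 d2
    convert this using 1
    · have := n1.ne
      have := n2.ne
      field_simp
    · have : (q ^ (((d:ℤ) - r) * (k+1:ℕ)) : RatFunc ℚ) =
        q ^ ((d:ℤ) - r) * q ^ (((d:ℤ) - r) * k) := by
        rw [← zpow_add₀ q_ne]; congr 1; push_cast; ring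
      rw [this]; ring

theorem EX_1q (hm : 1 < m) : EX m 0 (1 - q) := by
  have := EX_unit (m := m) (by omega) 1 (by
    intro h
    have := Int.le_of_dvd (by norm_num) h
    omega)
  simpa using this

theorem DV_qint (hm : 1 < m) (s : ℤ) : DV m 0 (qint s) := by
  unfold qint
  rw [div_eq_mul_inv]
  exact (dv1q (by omega) s).mul ((EX_1q hm).inv.dv le_rfl) (by norm_num)

theorem Setup.tau_symm (S : Setup m d a r) {k : ℕ} (hk : k ≤ a) :
    Cg m 1 (tau d r (a - k)) (- tau d r k) := by
  have hm := S.pos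
  have dk : DV m 0 (tt d r k) := (S.tt_ex hk).dv le_rfl
  have dak : DV m 0 (tt d r (a-k)) := (S.tt_ex (by omega)).dv le_rfl
  have da : DV m 0 (tt d r a) := (S.tt_ex le_rfl).dv le_rfl
  have h1 := S.tt_symm hk
  have h2 := S.tt_symm (k := a) le_rfl
  rw [Nat.sub_self, tt_zero] at h2
  have hX : DV m 0 (q ^ (((d:ℤ) - r) * k) * tt d r k * tt d r a) :=
    ((dvq hm _).mul dk z00).mul da z00
  have h1 := h1.pow dak hX 6
  have hY : DV m 0 (q ^ (((d:ℤ) - r) * a) * tt d r a * tt d r a) :=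
    ((dvq hm _).mul da z00).mul da z00
  have h2 := h2.pow (DV.one m) hY 3
  -- reduce to power identity
  set E1 : ℤ := (2 * (d : ℤ) - 3 * r) * (a - k) + 6 * ((d - r) * k) with hE1
  set F1 : ℤ := (2 * (d : ℤ) - 3 * r) * k + 3 * ((d - r) * a) with hF1
  have h3 : Cg m 1 (q ^ E1 - q ^ (E1 + (2 * d * (a - k) + r)))
      (q ^ (F1 + (2 * d * k + r)) - q ^ F1) := by
    refine (Cg_zpow hm _ _ ?_).sub (Cg_zpow hm _ _ ?_)
    · exact dveq (dvd_neg.2 S.hdvd) (by rw [hE1, hF1]; ring)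
    · exact dveq S.hdvd (by rw [hE1, hF1]; ring)
  have hc : ((a - k : ℕ) : ℤ) = (a:ℤ) - k := by push_cast [hk]; ring
  -- step 1
  have g0 : DV m 0 (qint (2 * d * ((a:ℤ) - k) + r) * q ^ ((2 * (d : ℤ) - 3 * r) * ((a:ℤ) - k))) :=
    (DV_qint S.hm _).mul (dvq hm _) z00
  have s1 := (Cg.refl m 1 (qint (2 * d * ((a:ℤ) - k) + r) *
    q ^ ((2 * (d : ℤ) - 3 * r) * ((a:ℤ) - k)))).mul h1 g0 (hX.pow0 6)
  -- step 2
  have hu : EX m 0 (1 - q) := EX_1q S.hm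
  have s2 := ((h3.mul (Cg.refl m 1 (tt d r k ^ 6 * tt d r a ^ 6)) ((dvq hm _).sub (dvq hm _))
    ((dk.pow0 6).mul (da.pow0 6) z00)).mul (Cg.refl m 1 ((1-q)⁻¹))
     (((dvq hm _).sub (dvq hm _)).mul ((dk.pow0 6).mul (da.pow0 6) z00)
       z00) (hu.inv.dv le_rfl))
  have hZ : DV m 0 ((q ^ (2 * d * k + r) - 1) * q ^ ((2 * (d : ℤ) - 3 * r) * k) *
    (1-q)⁻¹ * tt d r k ^ 6) := by
    refine ((((dvq hm _).sub (DV.one m)).mul (dvq hm _) z00).mul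
      (hu.inv.dv le_rfl) z00).mul (dk.pow0 6) z00
  have s3 := (Cg.refl m 1 ((q ^ (2 * d * k + r) - 1) * q ^ ((2 * (d : ℤ) - 3 * r) * k) *
    (1-q)⁻¹ * tt d r k ^ 6)).mul h2.symm hZ ((DV.one m).pow0 3)
  have e6 : ∀ x : ℤ, (q ^ x : RatFunc ℚ) ^ 6 = q ^ (6 * x) := by
    intro x; rw [mul_comm, zpow_mul]; norm_cast
  have e3 : ∀ x : ℤ, (q ^ x : RatFunc ℚ) ^ 3 = q ^ (3 * x) := by
    intro x; rw [mul_comm, zpow_mul]; norm_cast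
  have t1 : tau d r (a - k) = qint (2 * d * ((a:ℤ) - k) + r) *
      q ^ ((2 * (d : ℤ) - 3 * r) * ((a:ℤ) - k)) * tt d r (a - k) ^ 6 := by
    unfold tau; rw [hc]; ring
  rw [t1]
  refine s1.trans ?_
  have m1 : qint (2 * d * ((a:ℤ) - k) + r) * q ^ ((2 * (d : ℤ) - 3 * r) * ((a:ℤ) - k)) *
      (q ^ (((d:ℤ) - r) * k) * tt d r k * tt d r a) ^ 6 =
      (q ^ E1 - q ^ (E1 + (2 * d * (a - k) + r))) * (tt d r k ^ 6 * tt d r a ^ 6) * (1-q)⁻¹ := by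
    rw [mul_pow, mul_pow, e6, hE1, zpow_add₀ q_ne _ (2 * d * ((a:ℤ) - k) + r), zpow_add₀ q_ne]
    unfold qint
    rw [div_eq_mul_inv]; ring
  rw [m1]
  refine s2.trans ?_
  have m2 : (q ^ (F1 + (2 * d * k + r)) - q ^ F1) * (tt d r k ^ 6 * tt d r a ^ 6) * (1-q)⁻¹ =
      (q ^ (2 * d * k + r) - 1) * q ^ ((2 * (d : ℤ) - 3 * r) * k) *
    (1-q)⁻¹ * tt d r k ^ 6 * (q ^ (((d:ℤ) - r) * a) * tt d r a * tt d r a) ^ 3 := by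
    rw [mul_pow, mul_pow, e3, hF1, zpow_add₀ q_ne _ (2 * d * (k:ℤ) + r), zpow_add₀ q_ne]
    ring
  rw [m2]
  have m3 : - tau d r k = (q ^ (2 * d * k + r) - 1) * q ^ ((2 * (d : ℤ) - 3 * r) * k) *
    (1-q)⁻¹ * tt d r k ^ 6 * 1 ^ 3 := by
    unfold tau qint; rw [div_eq_mul_inv]; ring
  rw [m3]
  exact s3

theorem anti_sum (w : ℕ → RatFunc ℚ) (h : ∀ k ≤ a, Cg m 1 (w (a - k)) (- w k)) :
    DV m 1 (∑ k ∈ range (a+1), w k) := by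
  have h1 : DV m 1 (∑ k ∈ range (a+1), (w (a - k) - (- w k))) :=
    DV.sum _ _ fun k hk => h k (by have := Finset.mem_range.1 hk; omega)
  have h2 : ∑ k ∈ range (a+1), w (a - k) = ∑ k ∈ range (a+1), w k := by
    have := Finset.sum_range_reflect w (a+1)
    simpa using this
  simp only [sub_neg_eq_add] at h1
  rw [Finset.sum_add_distrib, h2] at h1
  have := h1.mul ((EX_two m).inv.dv le_rfl) (by norm_num : (1:ℤ) ≤ 1 + -0)
  convert this using 1
  have : (2 : RatFunc ℚ) ≠ 0 := (EX_two m).ne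
  field_simp
  ring

theorem step_symm (h : ℕ → RatFunc ℚ)
    (hs : ∀ k b, k + 1 + b = a → DV m 1 ((h (b+1) - h b) + (h (k+1) - h k))) (k : ℕ) (hk : k ≤ a) :
    Cg m 1 (h (a - k)) (h k) := by
  have key : ∀ k ≤ a, DV m 1 ((h (a - k) - h k) - (h a - h 0)) := by
    intro k hk
    induction k with
    | zero => simpa using DV.zero m 1
    | succ k ih =>
      have ih := ih (by omega)
      have := ih.sub (hs k (a - (k+1)) (by omega))
      have e : a - (k+1) + 1 = a - k := by omega
      rw [e] at this
      convert this using 1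
      ring
  have h0 : DV m 1 (h a - h 0) := by
    have h1 := key a le_rfl
    rw [Nat.sub_self] at h1
    have := h1.mul ((EX_two m).inv.dv le_rfl) (by norm_num : (1:ℤ) ≤ 1 + -0)
    have := this.neg
    convert this using 1
    have : (2 : RatFunc ℚ) ≠ 0 := (EX_two m).ne
    field_simp
    ring
  have := (key k hk).add h0
  unfold Cg
  convert this using 1
  ring
end ph

section low
variable {m d a : ℕ} {r : ℤ}

theorem ne_rd (hr : r = 1 ∨ r = -1) (hd : 3 ≤ d) (i : ℕ) : r + d * i ≠ 0 := by
  intro h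
  have h1 : (d:ℤ) ∣ r := ⟨-i, by linarith⟩
  have h2 := Int.natAbs_dvd_natAbs.2 h1
  have h3 := Nat.le_of_dvd (by omega) h2
  simp at h3; omega

theorem ne_2rd (hr : r = 1 ∨ r = -1) (hd : 3 ≤ d) (i : ℕ) : 2 * r + d * i ≠ 0 := by
  intro h
  have h1 : (d:ℤ) ∣ 2 * r := ⟨-i, by linarith⟩
  have h2 := Int.natAbs_dvd_natAbs.2 h1
  have h3 := Nat.le_of_dvd (by omega) h2
  simp at h3; omega

theorem ne_drd (hr : r = 1 ∨ r = -1) (hd : 3 ≤ d) (i : ℕ) : (d:ℤ) - r + d * i ≠ 0 := by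
  have : (0:ℤ) ≤ d * i := by positivity
  omega

theorem ne_dd (hd : 3 ≤ d) (i : ℕ) : (d:ℤ) + d * i ≠ 0 := by
  have : (0:ℤ) ≤ d * i := by positivity
  omega

/-- indicator -/
def ind (p : Prop) [Decidable p] : ℤ := if p then 1 else 0

theorem Setup.exr (S : Setup m d a r) (hr : r = 1 ∨ r = -1) (hd : 3 ≤ d) (k : ℕ) :
    EX m (((k / m : ℕ) : ℤ) + ind (a < k % m)) (PH d r k) :=
  EX_PH S.pos S.cop r (ne_rd hr hd) a S.ha (dveq S.hdvd (by ring)) k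

theorem Setup.exd (S : Setup m d a r) (hd : 3 ≤ d) (k : ℕ) :
    EX m ((k / m : ℕ) : ℤ) (PH d d k) := by
  have hm := S.pos
  have := EX_PH S.pos S.cop d (ne_dd hd) (m-1) (by omega) ⟨d, by push_cast [hm]; ring⟩ k
  have h2 := Nat.mod_lt k hm
  have h3 : ¬ (m - 1 < k % m) := by omega
  simpa [h3] using this

theorem Setup.exdr (S : Setup m d a r) (hr : r = 1 ∨ r = -1) (hd : 3 ≤ d) (k : ℕ) :
    EX m (((k / m : ℕ) : ℤ) + ind (m - 1 - a < k % m)) (PH d (d - r) k) := by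
  have hm := S.pos
  have ha := S.ha
  refine EX_PH S.pos S.cop (d - r) (ne_drd hr hd) (m - 1 - a) (by omega) ?_ k
  obtain ⟨c, hc⟩ := S.hdvd
  have : ((m - 1 - a : ℕ) : ℤ) = m - 1 - a := by omega
  rw [this]
  exact ⟨d - c, by linear_combination -hc⟩

theorem Setup.ex2r (S : Setup m d a r) (hr : r = 1 ∨ r = -1) (hd : 3 ≤ d) (k : ℕ) :
    EX m (((k / m : ℕ) : ℤ) + ind ((2 * a) % m < k % m)) (PH d (2 * r) k) := by
  have hm := S.pos
  refine EX_PH S.pos S.cop (2 * r) (ne_2rd hr hd) ((2 * a) % m) (Nat.mod_lt _ hm) ?_ k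
  obtain ⟨c, hc⟩ := S.hdvd
  have h1 : ((2 * a) % m : ℕ) + (m:ℤ) * ((2 * a) / m : ℕ) = 2 * a := by
    exact_mod_cast Nat.mod_add_div (2 * a) m
  exact ⟨2 * c - d * ((2 * a) / m : ℕ), by linear_combination 2 * hc + d * h1⟩

theorem Setup.tt_ex' (S : Setup m d a r) (hr : r = 1 ∨ r = -1) (hd : 3 ≤ d) (k : ℕ) :
    EX m (ind (a < k % m)) (tt d r k) := by
  have := (S.exr hr hd k).div (S.exd hd k)
  simpa [tt] using this

theorem ind_nonneg (p : Prop) [Decidable p] : 0 ≤ ind p := by unfold ind; split_ifs <;> norm_num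

theorem ind_pos {p : Prop} [Decidable p] (h : p) : ind p = 1 := by simp [ind, h]
theorem ind_neg {p : Prop} [Decidable p] (h : ¬ p) : ind p = 0 := by simp [ind, h]

theorem Setup.tt_dv (S : Setup m d a r) (hr : r = 1 ∨ r = -1) (hd : 3 ≤ d) (k : ℕ) :
    DV m 0 (tt d r k) := (S.tt_ex' hr hd k).dv (ind_nonneg _)

theorem Setup.tau_hi (S : Setup m d a r) (hr : r = 1 ∨ r = -1) (hd : 3 ≤ d) (k : ℕ) (hk : a < k)
    (hk' : k < m) : DV m 6 (tau d r k) := by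
  have := (S.tt_ex' hr hd k).pow 6
  rw [Nat.mod_eq_of_lt hk', ind_pos hk] at this
  unfold tau
  exact ((DV_qint S.hm _).mul (this.dv (le_refl _)) (by norm_num : (6:ℤ) ≤ _)).mul (dvq S.pos _)
    (by norm_num)

theorem Setup.tt_add (S : Setup m d a r) (hr : r = 1 ∨ r = -1) (hd : 3 ≤ d) (u v : ℕ) (hv : v < m) :
    Cg m 1 (tt d r (u * m + v)) (tt d r (u * m) * tt d r v) := by
  have hm := S.pos
  induction v with
  | zero => simpa [tt_zero] using Cg.refl m 1 _
  | succ v ih =>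
    have ih := ih (by omega)
    rw [← add_assoc, tt_succ, tt_succ, ← mul_assoc]
    have u1 : EX m 0 (1 - q ^ ((d:ℤ) + d * (u * m + v : ℕ))) := by
      refine EX_unit hm _ fun h => S.u2 (α := d + d * u * m) (i := v) ⟨d * u, by ring⟩ hv ?_
      exact dveq h (by push_cast; ring)
    have u2 : EX m 0 (1 - q ^ ((d:ℤ) + d * v)) := EX_unit hm _ (S.u2 (by simp) hv)
    refine ih.mul (Cg_div (Cg_one_sub hm _ _ ⟨d * u, by push_cast; ring⟩)
      (Cg_one_sub hm _ _ ⟨d * u, by push_cast; ring⟩) (dv1q hm _) u1 u2) (S.tt_dv hr hd _) ?_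
    rw [div_eq_mul_inv]
    exact (dv1q hm _).mul (u2.inv.dv le_rfl) z00

theorem Setup.tau_add (S : Setup m d a r) (hr : r = 1 ∨ r = -1) (hd : 3 ≤ d) (u v : ℕ)
    (hv : v < m) :
    Cg m 1 (tau d r (u * m + v)) (tt d r (u * m) ^ 6 * tau d r v) := by
  have hm := S.pos
  have h1 := (S.tt_add hr hd u v hv).pow (S.tt_dv hr hd _) ((S.tt_dv hr hd _).mul0 (S.tt_dv hr hd _)) 6
  have h2 : Cg m 1 (qint (2 * d * (u * m + v : ℕ) + r)) (qint (2 * d * v + r)) := by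
    unfold qint
    exact Cg_div (Cg_one_sub hm _ _ ⟨2 * d * u, by push_cast; ring⟩) (Cg.refl _ _ _) (dv1q hm _)
      (EX_1q S.hm) (EX_1q S.hm)
  have h3 : Cg m 1 (q ^ ((2 * (d : ℤ) - 3 * r) * (u * m + v : ℕ))) (q ^ ((2 * (d : ℤ) - 3 * r) * v)) :=
    Cg_zpow hm _ _ ⟨(2 * (d : ℤ) - 3 * r) * u, by push_cast; ring⟩
  have := (h2.mul h1 (DV_qint S.hm _) (((S.tt_dv hr hd _).mul0 (S.tt_dv hr hd _)).pow0 6)).mul h3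
    ((DV_qint S.hm _).mul0 ((S.tt_dv hr hd _).pow0 6)) (dvq hm _)
  unfold tau
  convert this using 1
  ring

theorem Setup.tau_sum0 (S : Setup m d a r) : DV m 1 (∑ v ∈ range (a+1), tau d r v) :=
  anti_sum _ fun _ hk => S.tau_symm hk

theorem Setup.tau_sum1 (S : Setup m d a r) (hr : r = 1 ∨ r = -1) (hd : 3 ≤ d) :
    DV m 1 (∑ v ∈ range m, tau d r v) := by
  have ha := S.ha
  obtain ⟨b, hb⟩ : ∃ b, m = (a + 1) + b := ⟨m - (a+1), by omega⟩
  rw [hb, Finset.sum_range_add, ← hb]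
  refine S.tau_sum0.add (DV.sum _ _ fun i hi => ?_)
  have := Finset.mem_range.1 hi
  exact (S.tau_hi hr hd _ (by omega) (by omega)).mono (by norm_num)

theorem Setup.tau_blk (S : Setup m d a r) (hr : r = 1 ∨ r = -1) (hd : 3 ≤ d) (u b : ℕ)
    (hb : b ≤ m) (h : DV m 1 (∑ v ∈ range b, tau d r v)) :
    DV m 1 (∑ v ∈ range b, tau d r (u * m + v)) := by
  have h1 := Cg.sum (range b) _ _ fun v hv =>
    S.tau_add hr hd u v (by have := Finset.mem_range.1 hv; omega)
  refine h1.dv ?_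
  rw [← Finset.mul_sum]
  exact ((S.tt_dv hr hd _).pow0 6).mul h (by norm_num)

theorem Setup.tau_sumu (S : Setup m d a r) (hr : r = 1 ∨ r = -1) (hd : 3 ≤ d) (u : ℕ) :
    DV m 1 (∑ v ∈ range (u * m), tau d r v) := by
  induction u with
  | zero => simpa using DV.zero m 1
  | succ u ih =>
    rw [add_mul, one_mul, Finset.sum_range_add]
    exact ih.add (S.tau_blk hr hd u m le_rfl (S.tau_sum1 hr hd))

theorem Setup.tau_sumua (S : Setup m d a r) (hr : r = 1 ∨ r = -1) (hd : 3 ≤ d) (u : ℕ) :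
    DV m 1 (∑ v ∈ range (u * m + a + 1), tau d r v) := by
  rw [add_assoc, Finset.sum_range_add]
  exact (S.tau_sumu hr hd u).add (S.tau_blk hr hd u (a+1) S.ha S.tau_sum0)

/-- the summand of the right hand side -/
noncomputable def Q4 (d : ℕ) (r : ℤ) (k : ℕ) : RatFunc ℚ :=
  PH d r k ^ 3 * PH d (d - r) k * q ^ ((d:ℤ) * k) / (PH d d k ^ 3 * PH d (2 * r) k)

theorem Setup.Q4_ex (S : Setup m d a r) (hr : r = 1 ∨ r = -1) (hd : 3 ≤ d) (k : ℕ) :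
    EX m (3 * ind (a < k % m) + ind (m - 1 - a < k % m) - ind ((2 * a) % m < k % m))
      (Q4 d r k) := by
  have := (((S.exr hr hd k).pow 3).mul (S.exdr hr hd k)).mul (EX_qz S.pos ((d:ℤ) * k))
  have := this.div (((S.exd hd k).pow 3).mul (S.ex2r hr hd k))
  unfold Q4
  convert this using 1
  push_cast; ring

theorem Setup.pre_ex (S : Setup m d a r) (hr : r = 1 ∨ r = -1) (hd : 3 ≤ d) (k : ℕ) :
    EX m (ind ((2 * a) % m < k % m)) (PH d (2 * r) k / PH d d k) := by
  have := (S.ex2r hr hd k).div (S.exd hd k)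
  convert this using 1
  ring

theorem ind_case (a v m : ℕ) (ha : a < m) (_ : v < m) :
    0 ≤ ind ((2 * a) % m < a) + (3 * ind (a < v) + ind (m - 1 - a < v) - ind ((2 * a) % m < v)) := by
  unfold ind
  rcases lt_or_ge (2 * a) m with h | h
  · rw [Nat.mod_eq_of_lt h]
    split_ifs <;> first | omega
  · rw [Nat.mod_eq_sub_mod h, Nat.mod_eq_of_lt (by omega)]
    split_ifs <;> first | omega

/-- inner sum of the right hand side -/
noncomputable def inn (d : ℕ) (r : ℤ) (k : ℕ) : RatFunc ℚ :=
  ∑ j ∈ range k, (q ^ ((d:ℤ) + d * j) / qint ((d:ℤ) + d * j) ^ 2 +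
    q ^ (r + d * j) / qint (r + d * j) ^ 2)

/-- the right hand side -/
noncomputable def Rs (d a : ℕ) (r N : ℤ) : RatFunc ℚ :=
  qint N * q ^ (-r * a) * (PH d (2 * r) a / PH d d a) *
    ∑ k ∈ range (a + 1), Q4 d r k * (1 - qint N ^ 2 * (2 - q ^ N) * inn d r k)

theorem qint_dv1 (hm : 1 < m) {N : ℤ} (h : (m:ℤ) ∣ N) : DV m 1 (qint N) := by
  unfold qint
  rw [div_eq_mul_inv]
  exact (DV_one_sub (by omega) N h).mul ((EX_1q hm).inv.dv le_rfl) (by norm_num)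

theorem qq_dv (hm : 1 < m) {N s : ℤ} (h : (m:ℤ) ∣ N) (hs : s ≠ 0) :
    DV m 0 (qint N ^ 2 * (q ^ s / qint s ^ 2)) := by
  have h0 := EX_one_sub m (by omega) s hs
  have h1 : qint N ^ 2 * (q ^ s / qint s ^ 2) = ((1 - q ^ N) * (1 - q ^ s)⁻¹) ^ 2 * q ^ s := by
    have := (EX_1q hm).ne
    have := h0.ne
    unfold qint
    field_simp
  rw [h1]
  refine DV.mul0 (DV.pow0 ?_ 2) (dvq (by omega) s)
  refine (DV_one_sub (by omega) N h).mul (h0.inv.dv le_rfl) ?_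
  split_ifs <;> norm_num

theorem Setup.Rs_dv (S : Setup m d a r) (hr : r = 1 ∨ r = -1) (hd : 3 ≤ d) (t : ℕ) {N : ℤ}
    (hN : (m:ℤ) ∣ N) : DV m 1 (Rs d (t * m + a) r N) := by
  have hm := S.pos
  unfold Rs
  rw [mul_assoc, Finset.mul_sum]
  refine ((qint_dv1 S.hm hN).mul (dvq hm _) (by norm_num : (1:ℤ) ≤ 1 + 0)).mul
    (DV.sum _ _ fun k _ => ?_) (by norm_num : (1:ℤ) ≤ 1 + 0)
  rw [← mul_assoc]
  refine DV.mul0 ?_ ((DV.one m).sub ?_)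
  · refine ((S.pre_ex hr hd (t * m + a)).mul (S.Q4_ex hr hd k)).dv ?_
    have e : (t * m + a) % m = a := by
      rw [add_comm, Nat.add_mul_mod_self_right, Nat.mod_eq_of_lt S.ha]
    rw [e]
    exact ind_case a (k % m) m S.ha (Nat.mod_lt _ hm)
  · rw [mul_right_comm]
    refine DV.mul0 ?_ (((EX_two m).dv le_rfl).sub (dvq hm N))
    unfold inn
    rw [Finset.mul_sum]
    refine DV.sum _ _ fun j _ => ?_
    rw [mul_add]
    exact (qq_dv S.hm hN (ne_dd hd j)).add (qq_dv S.hm hN (ne_rd hr hd j))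
end low

section wat
variable {d a : ℕ} {r N : ℤ}

theorem osq_ne {s : ℤ} (hs : s ≠ 0) : (1 - q ^ s : RatFunc ℚ) ≠ 0 :=
  (EX_one_sub 1 one_pos s hs).ne

theorem PH_ne {α : ℤ} (h : ∀ i : ℕ, α + d * i ≠ 0) (k : ℕ) : PH d α k ≠ 0 :=
  Finset.prod_ne_zero_iff.2 fun i _ => osq_ne (h i)

theorem PH_succ' (d : ℕ) (α : ℤ) (k : ℕ) : PH d α (k+1) = (1 - q ^ α) * PH d (α + d) k := by
  unfold PH
  rw [Finset.prod_range_succ', mul_comm]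
  congr 1
  · simp
  · refine Finset.prod_congr rfl fun i _ => ?_
    congr 2; push_cast; ring

noncomputable def ph (d : ℕ) (r s : ℤ) (k : ℕ) : RatFunc ℚ := PH d (r + s) k / PH d (d - s) k

theorem W (hd : 0 < d) (hN : N = d * a + r) (s1 s2 s3 s4 : ℤ)
    (g1 : ∀ i : ℕ, (d:ℤ) - s1 + d * i ≠ 0) (g2 : ∀ i : ℕ, (d:ℤ) - s2 + d * i ≠ 0)
    (g3 : ∀ i : ℕ, (d:ℤ) - s3 + d * i ≠ 0) (g4 : ∀ i : ℕ, (d:ℤ) - s4 + d * i ≠ 0)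
    (g5 : ∀ i : ℕ, 2 * r + s3 + s4 - N + d * i ≠ 0)
    (g6 : ∀ i : ℕ, (d:ℤ) + N + d * i ≠ 0)
    (g7 : ∀ j < a, r + s3 + d * j ≠ 0) (g8 : ∀ j < a, r + s4 + d * j ≠ 0) :
    ∑ k ∈ range (a + 1), qint (2 * d * k + r) *
      (ph d r 0 k * ph d r s1 k * ph d r s2 k * ph d r s3 k * ph d r s4 k * ph d r (-N) k) *
        q ^ ((2 * (d:ℤ) - 3 * r - (s1 + s2 + s3 + s4) + N) * k) =
    qint N * (PH d r a * PH d (d - r - s3 - s4) a / (PH d (d - s3) a * PH d (d - s4) a)) *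
      ∑ j ∈ range (a + 1), PH d (d - r - s1 - s2) j * PH d (r + s3) j * PH d (r + s4) j *
        PH d (r - N) j * q ^ ((d:ℤ) * j) /
        (PH d d j * PH d (d - s1) j * PH d (d - s2) j * PH d (2 * r + s3 + s4 - N) j) := by
  have hd' : (0:ℤ) < d := by exact_mod_cast hd
  have ep : (q ^ d : RatFunc ℚ) = q ^ (d:ℤ) := (zpow_natCast q d).symm
  have ek : ∀ k : ℕ, ((q ^ d) ^ k : RatFunc ℚ) = q ^ ((d:ℤ) * k) := by
    intro k; rw [ep, zpow_mul]; exact (zpow_natCast _ _).symm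
  have e1 : (q ^ (r + s2) * q ^ (d - r - s1 - s2) : RatFunc ℚ) = q ^ (d - s1) := by
    rw [← zpow_add₀ q_ne]; congr 1; ring
  have e2 : (q ^ (r + s1) * q ^ (d - r - s1 - s2) : RatFunc ℚ) = q ^ (d - s2) := by
    rw [← zpow_add₀ q_ne]; congr 1; ring
  have e3 : (q ^ (r + s4) * q ^ (d - r - s3 - s4) : RatFunc ℚ) = q ^ (d - s3) := by
    rw [← zpow_add₀ q_ne]; congr 1; ring
  have e4 : (q ^ (r + s3) * q ^ (d - r - s3 - s4) : RatFunc ℚ) = q ^ (d - s4) := by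
    rw [← zpow_add₀ q_ne]; congr 1; ring
  have e5 : (q ^ r * (q ^ d) ^ (a + 1) : RatFunc ℚ) = q ^ (d + N) := by
    rw [ek, ← zpow_add₀ q_ne]; congr 1; rw [hN]; push_cast; ring
  have e6 : (q ^ d / (q ^ (d - r - s3 - s4) * (q ^ d) ^ a) : RatFunc ℚ) =
      q ^ (2 * r + s3 + s4 - N) := by
    rw [ek, ep, ← zpow_add₀ q_ne, ← zpow_sub₀ q_ne]; congr 1; rw [hN]; ring
  have e7 : (((q ^ d) ^ a)⁻¹ : RatFunc ℚ) = q ^ (r - N) := by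
    rw [ek, ← zpow_neg]; congr 1; rw [hN]; ring
  have e8 : (q ^ r * q ^ d : RatFunc ℚ) = q ^ (r + d) := by rw [ep, ← zpow_add₀ q_ne]
  have e9 : (q ^ (d - r - s1 - s2) * q ^ (d - r - s3 - s4) * (q ^ d) ^ a : RatFunc ℚ) =
      q ^ (2 * (d:ℤ) - 3 * r - (s1 + s2 + s3 + s4) + N) := by
    rw [ek, ← zpow_add₀ q_ne, ← zpow_add₀ q_ne]; congr 1; rw [hN]; ring
  have epp : ∀ k, pch (q ^ d) (q ^ d) k = PH d d k := by
    intro k; have := pch_eq d d k; rwa [← ep] at this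
  have hdd : ∀ k, PH d d k ≠ 0 := fun k => PH_ne (fun i => by positivity) k
  have := watson (q ^ d) (q ^ r) (q ^ (r + s1)) (q ^ (r + s2)) (q ^ (r + s3)) (q ^ (r + s4))
    (q ^ (d - r - s1 - s2)) (q ^ (d - r - s3 - s4)) (pow_ne_zero _ q_ne) (zpow_ne_zero _ q_ne)
    (by rw [ep, ← zpow_add₀ q_ne, ← zpow_add₀ q_ne, ← zpow_add₀ q_ne]; congr 1; ring)
    (by rw [ep, ← zpow_add₀ q_ne, ← zpow_add₀ q_ne, ← zpow_add₀ q_ne]; congr 1; ring)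
    a (by intro k; rw [epp]; exact hdd k)
    (by intro k; rw [e3, pch_eq]; exact PH_ne g3 k)
    (by intro k; rw [e4, pch_eq]; exact PH_ne g4 k)
    (by intro k; rw [e5, pch_eq]; exact PH_ne g6 k)
    (by intro k; rw [e6, pch_eq]; exact PH_ne g5 k)
    (by intro k; rw [e1, pch_eq]; exact PH_ne g1 k)
    (by intro k; rw [e2, pch_eq]; exact PH_ne g2 k)
    (by intro j hj; rw [ek, ← zpow_add₀ q_ne]; exact osq_ne (g7 j hj))
    (by intro j hj; rw [ek, ← zpow_add₀ q_ne]; exact osq_ne (g8 j hj))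
  rw [e1, e2, e3, e4, e5, e6, e7, e8, e9] at this
  simp only [epp, pch_eq] at this
  have hpre : (1 - q ^ r) * PH d (r + d) a = PH d r a * (1 - q ^ N) := by
    rw [← PH_succ', PH_succ, hN]; congr 3; ring
  rw [hpre] at this
  have key := congrArg (fun x => x * (1 - q)⁻¹) this
  convert key using 1
  · rw [Finset.sum_mul]
    refine Finset.sum_congr rfl fun k _ => ?_
    have x1 : (q ^ r * (q ^ d) ^ (2 * k) : RatFunc ℚ) = q ^ (2 * d * k + r) := by
      rw [ek, ← zpow_add₀ q_ne]; congr 1; push_cast; ring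
    rw [x1, zpow_mul, zpow_natCast]
    unfold qint ph
    rw [sub_neg_eq_add, add_zero, sub_zero, ← sub_eq_add_neg]
    ring
  · unfold qint
    simp only [ek]
    ring
end wat

section main1
variable {n d a : ℕ} {r N : ℤ}

/-- standing assumptions -/
structure Main (n d a : ℕ) (r N : ℤ) : Prop where
  hr : r = 1 ∨ r = -1
  hd : 3 ≤ d
  hn : 1 < n
  cop : Nat.Coprime n d
  hN : N = d * a + r
  hNn : N = d * n - n

theorem Main.eq (H : Main n d a r N) : (d:ℤ) * (n - a) = n + r := by
  have := H.hN
  have := H.hNn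
  linarith

theorem Main.lt (H : Main n d a r N) : a < n := by
  have h := H.eq
  have hr := H.hr
  have hn := H.hn
  have hd := H.hd
  by_contra hc
  have h1 : ((n:ℤ) - a) ≤ 0 := by omega
  have h2 : (d:ℤ) * (n - a) ≤ 0 := mul_nonpos_of_nonneg_of_nonpos (by positivity) h1
  omega

theorem Main.ge (H : Main n d a r N) : 2 * n ≤ 3 * a + 1 := by
  have h := H.eq
  have hr := H.hr
  have hd := H.hd
  have hlt := H.lt
  have h1 : (3:ℤ) * (n - a) ≤ d * (n - a) :=
    mul_le_mul_of_nonneg_right (by exact_mod_cast hd) (by omega)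
  omega

theorem Main.dvdN (H : Main n d a r N) : (n:ℤ) ∣ N := ⟨d - 1, by rw [H.hNn]; ring⟩

theorem Main.S (H : Main n d a r N) : Setup n d a r :=
  ⟨H.hn, H.cop, H.lt, by rw [← H.hN]; exact H.dvdN⟩

theorem Main.ne_gen (H : Main n d a r N) {c x : ℤ} (hc : c = 1 ∨ c = -1 ∨ c = 2)
    (hx : (d:ℤ) ∣ x - c * r) : x ≠ 0 := by
  rintro rfl
  have hr := H.hr
  have hd := H.hd
  have h2 := Int.natAbs_dvd_natAbs.2 hx
  have h3 := Nat.le_of_dvd (by rcases hc with rfl | rfl | rfl <;> rcases hr with rfl | rfl <;> norm_num) h2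
  rcases hc with rfl | rfl | rfl <;> rcases hr with rfl | rfl <;> norm_num at h3 <;> omega

noncomputable def psi (d : ℕ) (r s : ℤ) (k : ℕ) : RatFunc ℚ := ph d r s k * ph d r (-s) k

noncomputable def cc (d : ℕ) (r s : ℤ) (k : ℕ) : RatFunc ℚ :=
  qint (2 * d * k + r) * ph d r 0 k * ph d r s k * q ^ ((2 * (d:ℤ) - 3 * r - s) * k)

noncomputable def FF (d a : ℕ) (r x y z : ℤ) : RatFunc ℚ :=
  ∑ k ∈ range (a + 1), cc d r z k * psi d r x k * psi d r y k

theorem Main.d0 (H : Main n d a r N) (i : ℕ) : (d:ℤ) - 0 + d * i ≠ 0 := by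
  have := ne_dd H.hd i; simpa using this

theorem Main.dN (H : Main n d a r N) (i : ℕ) : (d:ℤ) - N + d * i ≠ 0 :=
  H.ne_gen (c := -1) (by simp) ⟨1 - a + i, by rw [H.hN]; ring⟩

theorem Main.dN' (H : Main n d a r N) (i : ℕ) : (d:ℤ) + N + d * i ≠ 0 :=
  H.ne_gen (c := 1) (by simp) ⟨1 + a + i, by rw [H.hN]; ring⟩

theorem Main.dN'' (H : Main n d a r N) (i : ℕ) : (d:ℤ) - (-N) + d * i ≠ 0 :=
  H.ne_gen (c := 1) (by simp) ⟨1 + a + i, by rw [H.hN]; ring⟩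

theorem Main.rN (H : Main n d a r N) (i : ℕ) : r + N + d * i ≠ 0 :=
  H.ne_gen (c := 2) (by simp) ⟨a + i, by rw [H.hN]; ring⟩

theorem Main.r0 (H : Main n d a r N) (i : ℕ) : r + 0 + d * i ≠ 0 :=
  H.ne_gen (c := 1) (by simp) ⟨i, by ring⟩

theorem Main.rN' (H : Main n d a r N) (i : ℕ) (hi : i < a) : r + (-N) + d * i ≠ 0 := by
  have : r + (-N) + d * i = - (d * ((a:ℤ) - i)) := by rw [H.hN]; ring
  rw [this]
  have hd := H.hd
  have h1 : (0:ℤ) < d := by omega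
  have h2 : (0:ℤ) < (a:ℤ) - i := by omega
  have := mul_pos h1 h2
  omega

theorem Main.pref (H : Main n d a r N) :
    PH d r a * PH d (d - r - N) a = q ^ (-r * a) * PH d (2 * r) a * PH d (d - N) a := by
  have ep : (q ^ d : RatFunc ℚ) = q ^ (d:ℤ) := (zpow_natCast q d).symm
  have ek : ∀ k : ℕ, ((q ^ d) ^ k : RatFunc ℚ) = q ^ ((d:ℤ) * k) := by
    intro k; rw [ep, zpow_mul]; exact (zpow_natCast _ _).symm
  have h1 := pch_rev (q ^ r) (q ^ d) (zpow_ne_zero _ q_ne) (pow_ne_zero _ q_ne) a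
  have h2 := pch_rev (q ^ (2 * r)) (q ^ d) (zpow_ne_zero _ q_ne) (pow_ne_zero _ q_ne) a
  have e1 : (q ^ d / (q ^ r * (q ^ d) ^ a) : RatFunc ℚ) = q ^ (d - N) := by
    rw [ek, ep, ← zpow_add₀ q_ne, ← zpow_sub₀ q_ne]; congr 1; rw [H.hN]; ring
  have e2 : (q ^ d / (q ^ (2 * r) * (q ^ d) ^ a) : RatFunc ℚ) = q ^ (d - r - N) := by
    rw [ek, ep, ← zpow_add₀ q_ne, ← zpow_sub₀ q_ne]; congr 1; rw [H.hN]; ring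
  have e3 : ((q ^ (2 * r)) ^ a : RatFunc ℚ) = (q ^ r) ^ a * (q ^ r) ^ a := by
    rw [← mul_pow, ← zpow_add₀ q_ne, two_mul]
  have e4 : (q ^ (-r * a) : RatFunc ℚ) = ((q ^ r) ^ a)⁻¹ := by
    rw [neg_mul, zpow_neg, zpow_mul]; rfl
  rw [e1, pch_eq, pch_eq] at h1
  rw [e2, pch_eq, pch_eq, e3] at h2
  rw [e4]
  have hY : ((q ^ r) ^ a : RatFunc ℚ) ≠ 0 := pow_ne_zero _ (zpow_ne_zero _ q_ne)
  have hP : (∏ i ∈ range a, (q ^ d) ^ i : RatFunc ℚ) ≠ 0 :=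
    Finset.prod_ne_zero_iff.2 fun i _ => pow_ne_zero _ (pow_ne_zero _ q_ne)
  generalize (∏ i ∈ range a, (q ^ d) ^ i : RatFunc ℚ) = Z at *
  generalize ((q ^ r) ^ a : RatFunc ℚ) = Y at *
  rw [mul_assoc, eq_inv_mul_iff_mul_eq₀ hY]
  have : (Y * Z) * (Y * (PH d r a * PH d (d - r - N) a)) =
      (Y * Z) * (PH d (2 * r) a * PH d (d - N) a) := by
    linear_combination PH d r a * h2 - PH d (2 * r) a * h1
  exact mul_left_cancel₀ (mul_ne_zero hY hP) this

/-- coefficient -/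
noncomputable def Rk (d a : ℕ) (r N : ℤ) (k : ℕ) : RatFunc ℚ :=
  qint N * q ^ (-r * a) * (PH d (2 * r) a / PH d d a) *
    (PH d (d - r) k * PH d r k * q ^ ((d:ℤ) * k) / (PH d d k * PH d (2 * r) k))

theorem Main.prefd (H : Main n d a r N) :
    PH d r a * PH d (d - r - N) a / (PH d d a * PH d (d - N) a) =
     q ^ (-r * a) * (PH d (2 * r) a / PH d d a) := by
  have := PH_ne (fun i => ne_dd H.hd i) a
  have := PH_ne H.dN a
  rw [H.pref]
  field_simp

theorem Main.F1 (H : Main n d a r N) : FF d a r N 0 0 =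
    ∑ k ∈ range (a + 1), Rk d a r N k *
      (PH d (r + N) k * PH d (r - N) k * (PH d d k ^ 2)⁻¹) := by
  have hd := H.hd
  have := W (d := d) (a := a) (r := r) (by omega) H.hN 0 0 0 N H.d0 H.d0 H.d0 H.dN
    (fun i => H.ne_gen (c := 2) (by simp) ⟨i, by ring⟩) H.dN' (fun i _ => H.r0 i) (fun i _ => H.rN i)
  simp only [sub_zero, add_zero, H.prefd, Finset.mul_sum] at this
  unfold FF
  convert this using 2 with k _ k _
  · unfold cc psi
    rw [neg_zero, show (2 * (d:ℤ) - 3 * r - 0 : ℤ) = 2 * (d:ℤ) - 3 * r - (0 + N) + N by ring]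
    ring
  · unfold Rk
    rw [show (2 * r + N - N : ℤ) = 2 * r by ring]
    simp only [div_eq_mul_inv, mul_inv, pow_two]
    ring

theorem Main.F2 (H : Main n d a r N) : FF d a r N N 0 =
    ∑ k ∈ range (a + 1), Rk d a r N k *
      (PH d (r + N) k * PH d (r - N) k * (PH d (d - N) k * PH d (d + N) k)⁻¹) := by
  have hd := H.hd
  have := W (d := d) (a := a) (r := r) (by omega) H.hN N (-N) 0 N H.dN H.dN'' H.d0 H.dN
    (fun i => H.ne_gen (c := 2) (by simp) ⟨i, by ring⟩) H.dN' (fun i _ => H.r0 i) (fun i _ => H.rN i)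
  simp only [sub_zero, add_zero, H.prefd, Finset.mul_sum] at this
  unfold FF
  convert this using 2 with k _ k _
  · unfold cc psi
    rw [show (2 * (d:ℤ) - 3 * r - 0 : ℤ) = 2 * (d:ℤ) - 3 * r - (N + -N + N) + N by ring]
    ring
  · unfold Rk
    rw [show (2 * r + N - N : ℤ) = 2 * r by ring, show (d - r - N - -N : ℤ) = d - r by ring,
      sub_neg_eq_add]
    simp only [div_eq_mul_inv, mul_inv]
    ring

noncomputable def kap (d : ℕ) (r N : ℤ) (j : ℕ) : RatFunc ℚ :=
  PH d (d - r) j * PH d (r - N) j * q ^ ((d:ℤ) * j) / (PH d d j * PH d (2 * r - N) j)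

theorem Main.F3 (H : Main n d a r N) (x y : ℤ) (hx : x = 0 ∨ x = N) (hy : y = 0 ∨ y = N) :
    FF d a r x y (-N) =
    ∑ j ∈ range (a + 1), qint N * (PH d r a * PH d (d - r) a) * kap d r N j *
      ((PH d (d - x) a * PH d (d + x) a)⁻¹ * (PH d (r + x) j * PH d (r - x) j)) *
      (PH d (d - y) j * PH d (d + y) j)⁻¹ := by
  have hd := H.hd
  have a1 : ∀ z : ℤ, z = 0 ∨ z = N → ∀ i : ℕ, (d:ℤ) - z + d * i ≠ 0 := by
    rintro z (rfl | rfl); exacts [H.d0, H.dN]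
  have a2 : ∀ z : ℤ, z = 0 ∨ z = N → ∀ i : ℕ, (d:ℤ) - (-z) + d * i ≠ 0 := by
    rintro z (rfl | rfl)
    · rw [neg_zero]; exact H.d0
    · exact H.dN''
  have a3 : ∀ i < a, r + x + d * i ≠ 0 := by
    rcases hx with rfl | rfl
    · exact fun i _ => H.r0 i
    · exact fun i _ => H.rN i
  have a4 : ∀ i < a, r + (-x) + d * i ≠ 0 := by
    rcases hx with rfl | rfl
    · rw [neg_zero]; exact fun i _ => H.r0 i
    · exact H.rN'
  have := W (d := d) (a := a) (r := r) (by omega) H.hN y (-y) x (-x) (a1 y hy) (a2 y hy)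
    (a1 x hx) (a2 x hx)
    (fun i => H.ne_gen (c := 1) (by simp) ⟨i - a, by rw [H.hN]; ring⟩) H.dN' a3 a4
  simp only [Finset.mul_sum] at this
  unfold FF
  convert this using 2 with k _ k _
  · unfold cc psi
    rw [show (2 * (d:ℤ) - 3 * r - -N : ℤ) = 2 * (d:ℤ) - 3 * r - (y + -y + x + -x) + N by ring]
    ring
  · unfold kap
    rw [show (2 * r + x + -x - N : ℤ) = 2 * r - N by ring,
      show (d - r - x - -x : ℤ) = d - r by ring,
      show (d - r - y - -y : ℤ) = d - r by ring,
      sub_neg_eq_add, sub_neg_eq_add, sub_eq_add_neg r x]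
    simp only [div_eq_mul_inv, mul_inv]
    ring
end main1

section main2
variable {m : ℕ} {e E : ℤ} {u v x y eps : RatFunc ℚ}

theorem lin_mul (he : 0 ≤ e) (hE0 : 0 ≤ E) (hE : E ≤ e + e) (hε : DV m e eps) (hx : DV m 0 x)
    (hy : DV m 0 y) (hu : Cg m E u (1 + eps * x)) (hv : Cg m E v (1 + eps * y)) :
    Cg m E (u * v) (1 + eps * (x + y)) := by
  have hε0 := hε.mono he
  have h1x : DV m 0 (1 + eps * x) := (DV.one m).add (hε0.mul0 hx)
  have h1y : DV m 0 (1 + eps * y) := (DV.one m).add (hε0.mul0 hy)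
  have hv0 : DV m 0 v := hv.dv0 hE0 h1y
  have t1 : DV m E ((u - (1 + eps * x)) * v) := DV.mul hu hv0 (by simp)
  have t2 : DV m E ((1 + eps * x) * (v - (1 + eps * y))) := DV.mul h1x hv (by simp)
  have t3 : DV m E ((eps * eps) * (x * y)) := (hε.mul hε hE).mul (hx.mul0 hy) (by simp)
  have := (t1.add t2).add t3
  unfold Cg
  convert this using 1
  ring

theorem lin_prod (he : 0 ≤ e) (hE0 : 0 ≤ E) (hE : E ≤ e + e) (hε : DV m e eps)
    (k : ℕ) (u l : ℕ → RatFunc ℚ) (hl : ∀ i < k, DV m 0 (l i))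
    (hu : ∀ i < k, Cg m E (u i) (1 + eps * l i)) :
    Cg m E (∏ i ∈ range k, u i) (1 + eps * ∑ i ∈ range k, l i) := by
  induction k with
  | zero => simpa using Cg.refl m E 1
  | succ k ih =>
    rw [Finset.prod_range_succ, Finset.sum_range_succ]
    refine lin_mul he hE0 hE hε (DV.sum _ _ fun i hi => hl i ?_) (hl k (by omega))
      (ih (fun i hi => hl i (by omega)) (fun i hi => hu i (by omega))) (hu k (by omega))
    have := Finset.mem_range.1 hi; omega

theorem lin_inv (hE : E ≤ e + e) (hε : DV m e eps) (hx : DV m 0 x)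
    (h : EX m 0 (1 - eps * x)) : Cg m E ((1 - eps * x)⁻¹) (1 + eps * x) := by
  have := (((hε.mul hε hE).mul (hx.mul0 hx) (by simp : E ≤ E + 0))).mul (h.inv.dv le_rfl)
    (by simp : E ≤ E + _)
  unfold Cg
  convert this using 1
  have := h.ne
  field_simp
  ring

noncomputable def Aq (s : ℤ) : RatFunc ℚ := q ^ s / (1 - q ^ s)
noncomputable def Bq (s : ℤ) : RatFunc ℚ := q ^ s / (1 - q ^ s) ^ 2
noncomputable def ep (N : ℤ) : RatFunc ℚ := (1 - q ^ N) ^ 2 * q ^ (-N)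

theorem fac2 (N : ℤ) {s : ℤ} (hs : s ≠ 0) :
    ((1 - q ^ (s + N)) * (1 - q ^ (s - N)) : RatFunc ℚ) = (1 - q ^ s) ^ 2 * (1 - ep N * Bq s) := by
  have h1 := osq_ne hs
  have h2 : (q ^ N : RatFunc ℚ) ≠ 0 := zpow_ne_zero _ q_ne
  unfold ep Bq
  rw [zpow_add₀ q_ne, zpow_sub₀ q_ne, zpow_neg]
  field_simp
  ring

theorem PH_fac (d : ℕ) (N : ℤ) {α : ℤ} (hα : ∀ i : ℕ, α + d * i ≠ 0) (k : ℕ) :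
    PH d (α + N) k * PH d (α - N) k = PH d α k ^ 2 *
      ∏ i ∈ range k, (1 - ep N * Bq (α + d * i)) := by
  unfold PH
  rw [← Finset.prod_mul_distrib, ← Finset.prod_pow, ← Finset.prod_mul_distrib]
  refine Finset.prod_congr rfl fun i _ => ?_
  rw [← fac2 N (hα i)]
  congr 3 <;> ring

theorem DV_Bq (hm : 0 < m) {s : ℤ} (hs : ¬ (m:ℤ) ∣ s) : DV m 0 (Bq s) := by
  have := (EX_qz hm s).div ((EX_unit hm s hs).pow 2)
  exact this.dv (by norm_num)

theorem DV_Aq (hm : 0 < m) {s : ℤ} (hs : ¬ (m:ℤ) ∣ s) : DV m 0 (Aq s) := by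
  have := (EX_qz hm s).div (EX_unit hm s hs)
  exact this.dv (by norm_num)

theorem DV_ep (hm : 0 < m) {N : ℤ} (h : (m:ℤ) ∣ N) : DV m 2 (ep N) :=
  ((DV_one_sub hm N h).pow 2).mul (dvq hm _) (by norm_num)

theorem EX_fac (hm : 0 < m) {N s : ℤ} (h : (m:ℤ) ∣ N) (hs : ¬ (m:ℤ) ∣ s) :
    EX m 0 (1 - ep N * Bq s) := by
  have hs0 : s ≠ 0 := by rintro rfl; simp at hs
  have h1 := EX_unit hm (s + N) fun h' => hs (dveq (dvd_sub h' h) (by ring))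
  have h2 := EX_unit hm (s - N) fun h' => hs (dveq (dvd_add h' h) (by ring))
  have h3 := (h1.mul h2).div ((EX_unit hm s hs).pow 2)
  rw [fac2 N hs0, mul_div_cancel_left₀ _ (pow_ne_zero 2 (osq_ne hs0))] at h3
  simpa using h3

variable {n d a : ℕ} {r N : ℤ}

noncomputable def S1 (d : ℕ) (r : ℤ) (k : ℕ) : RatFunc ℚ := ∑ i ∈ range k, Bq (r + d * i)
noncomputable def uh (d : ℕ) (r N : ℤ) (k : ℕ) : RatFunc ℚ :=
  ∏ i ∈ range k, (1 - ep N * Bq (r + d * i))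
noncomputable def vh (d : ℕ) (N : ℤ) (k : ℕ) : RatFunc ℚ :=
  ∏ i ∈ range k, (1 - ep N * Bq (d + d * i))⁻¹

theorem Main.nr (H : Main n d a r N) {k i : ℕ} (hk : k ≤ a) (hi : i < k) : ¬ (n:ℤ) ∣ r + d * i :=
  H.S.u1 (by simp) (by have := H.lt; omega) (by omega)

theorem Main.nd (H : Main n d a r N) {k i : ℕ} (hk : k ≤ a) (hi : i < k) :
    ¬ (n:ℤ) ∣ (d:ℤ) + d * i :=
  H.S.u2 (by simp) (by have := H.lt; omega)

theorem Main.pos (H : Main n d a r N) : 0 < n := H.S.pos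

theorem Main.S1dv (H : Main n d a r N) {k : ℕ} (hk : k ≤ a) : DV n 0 (S1 d r k) :=
  DV.sum _ _ fun _ hi => DV_Bq H.pos (H.nr hk (Finset.mem_range.1 hi))

theorem Main.S2dv (H : Main n d a r N) {k : ℕ} (hk : k ≤ a) : DV n 0 (S1 d d k) :=
  DV.sum _ _ fun _ hi => DV_Bq H.pos (H.nd hk (Finset.mem_range.1 hi))

theorem Main.uhc (H : Main n d a r N) {k : ℕ} (hk : k ≤ a) :
    Cg n 4 (uh d r N k) (1 + ep N * (- S1 d r k)) := by
  unfold S1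
  rw [← Finset.sum_neg_distrib]
  refine lin_prod (by norm_num : (0:ℤ) ≤ 2) (by norm_num) (by norm_num) (DV_ep H.pos H.dvdN) k _ _
    (fun i hi => (DV_Bq H.pos (H.nr hk hi)).neg) fun i hi => ?_
  rw [mul_neg, ← sub_eq_add_neg]
  exact Cg.refl _ _ _

theorem Main.vhc (H : Main n d a r N) {k : ℕ} (hk : k ≤ a) :
    Cg n 4 (vh d N k) (1 + ep N * S1 d d k) := by
  refine lin_prod (by norm_num : (0:ℤ) ≤ 2) (by norm_num) (by norm_num) (DV_ep H.pos H.dvdN) k _ _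
    (fun i hi => (DV_Bq H.pos (H.nd hk hi))) fun i hi => ?_
  exact lin_inv (by norm_num) (DV_ep H.pos H.dvdN) (DV_Bq H.pos (H.nd hk hi))
    (EX_fac H.pos H.dvdN (H.nd hk hi))

theorem Main.U (H : Main n d a r N) (k : ℕ) :
    PH d (r + N) k * PH d (r - N) k = PH d r k ^ 2 * uh d r N k :=
  PH_fac d N (ne_rd H.hr H.hd) k

theorem Main.V (H : Main n d a r N) (k : ℕ) :
    (PH d (d - N) k * PH d (d + N) k)⁻¹ = (PH d d k ^ 2)⁻¹ * vh d N k := by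
  rw [mul_comm, PH_fac d N (ne_dd H.hd) k, mul_inv]
  unfold vh
  rw [Finset.prod_inv_distrib]

theorem Main.uh0 (H : Main n d a r N) {k : ℕ} (hk : k ≤ a) : DV n 0 (uh d r N k) :=
  (H.uhc hk).dv0 (by norm_num) ((DV.one n).add
    (((DV_ep H.pos H.dvdN).mono (by norm_num)).mul0 (H.S1dv hk).neg))

theorem Main.vh0 (H : Main n d a r N) {k : ℕ} (hk : k ≤ a) : DV n 0 (vh d N k) :=
  (H.vhc hk).dv0 (by norm_num) ((DV.one n).add
    (((DV_ep H.pos H.dvdN).mono (by norm_num)).mul0 (H.S2dv hk)))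

theorem Main.two_lt (H : Main n d a r N) : n ≤ 2 * a := by
  have := H.ge; have := H.hn; omega

theorem Main.mod2 (H : Main n d a r N) : (2 * a) % n = 2 * a - n := by
  have := H.two_lt
  have := H.lt
  rw [Nat.mod_eq_sub_mod (by omega), Nat.mod_eq_of_lt (by omega)]

theorem Main.Rk_dv (H : Main n d a r N) {k : ℕ} (hk : k ≤ a) : DV n 2 (Rk d a r N k) := by
  have hlt := H.lt
  have hge := H.ge
  have h2 := H.two_lt
  have hkn : k % n = k := Nat.mod_eq_of_lt (by omega)
  have han : a % n = a := Nat.mod_eq_of_lt (by omega)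
  have h1 := H.S.pre_ex H.hr H.hd a
  rw [han, H.mod2, ind_pos (by omega)] at h1
  have h3 := (((H.S.exdr H.hr H.hd k).mul (H.S.exr H.hr H.hd k)).mul (EX_qz H.pos ((d:ℤ) * k))).div
    ((H.S.exd H.hd k).mul (H.S.ex2r H.hr H.hd k))
  rw [hkn, H.mod2] at h3
  have h4 : DV n 0 _ := h3.dv (by unfold ind; split_ifs <;> omega)
  have h5 : DV n 1 (qint N * q ^ (-r * a)) :=
    (qint_dv1 H.hn H.dvdN).mul (dvq H.pos _) (by norm_num)
  exact (h5.mul (h1.dv le_rfl) (by norm_num : (2:ℤ) ≤ 1 + 1)).mul h4 (by norm_num)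

theorem Main.kap_dv (H : Main n d a r N) {k : ℕ} (hk : k ≤ a) : DV n 0 (kap d r N k) := by
  have hlt := H.lt
  have hge := H.ge
  have h2 := H.two_lt
  have hkn : k % n = k := Nat.mod_eq_of_lt (by omega)
  have hkn' : k / n = 0 := Nat.div_eq_of_lt (by omega)
  have e1 : EX n (((k / n : ℕ) : ℤ) + ind (2 * a - n < k % n)) (PH d (2 * r - N) k) := by
    refine EX_PH H.pos H.cop (2 * r - N)
      (fun i => H.ne_gen (c := 1) (by simp) ⟨i - a, by rw [H.hN]; ring⟩) (2 * a - n) (by omega) ?_ k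
    obtain ⟨c, hc⟩ := H.dvdN
    have : ((2 * a - n : ℕ) : ℤ) = 2 * a - n := by omega
    rw [this]
    have hN := H.hN
    exact ⟨c - d, by linear_combination hc - 2 * hN⟩
  have e2 : EX n 0 (PH d (r - N) k) := H.S.ex1 (dveq (dvd_neg.2 H.dvdN) (by ring)) hk
  have h3 := (((H.S.exdr H.hr H.hd k).mul e2).mul (EX_qz H.pos ((d:ℤ) * k))).div
    ((H.S.exd H.hd k).mul e1)
  rw [hkn, hkn'] at h3
  exact h3.dv (by unfold ind; split_ifs <;> omega)

theorem inn_eq (hq : (1 - q : RatFunc ℚ) ≠ 0) (d : ℕ) (r N : ℤ) (k : ℕ) :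
    qint N ^ 2 * inn d r k = (1 - q ^ N) ^ 2 * (S1 d d k + S1 d r k) := by
  unfold inn S1
  rw [← Finset.sum_add_distrib, Finset.mul_sum, Finset.mul_sum]
  refine Finset.sum_congr rfl fun i _ => ?_
  unfold Bq qint
  rw [div_pow, div_pow, div_pow, div_div_eq_mul_div, div_div_eq_mul_div]
  field_simp

theorem Main.part1 (H : Main n d a r N) :
    DV n 6 (2 * FF d a r N 0 0 - FF d a r N N 0 - Rs d a r N) := by
  rw [H.F1, H.F2]
  unfold Rs
  rw [Finset.mul_sum, Finset.mul_sum, ← Finset.sum_sub_distrib, ← Finset.sum_sub_distrib]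
  refine DV.sum _ _ fun k hk => ?_
  have hk : k ≤ a := by have := Finset.mem_range.1 hk; omega
  have hε := DV_ep H.pos H.dvdN
  have hε0 := hε.mono (by norm_num : (0:ℤ) ≤ 2)
  have c1 : Cg n 4 (2 - vh d N k) (1 + ep N * (- S1 d d k)) := by
    have := (Cg.refl n 4 2).sub (H.vhc hk)
    unfold Cg at this ⊢
    convert this using 1; ring
  have c2 := lin_mul (by norm_num) (by norm_num) (by norm_num) hε (H.S1dv hk).neg
    (H.S2dv hk).neg (H.uhc hk) c1
  have c3 : Cg n 4 (1 + ep N * (- S1 d r k + - S1 d d k))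
      (1 - qint N ^ 2 * (2 - q ^ N) * inn d r k) := by
    have hh := (((DV_one_sub H.pos N H.dvdN).pow 2).mul hε (by norm_num : (4:ℤ) ≤ _)).mul
      ((H.S1dv hk).add (H.S2dv hk)) (by norm_num : (4:ℤ) ≤ _)
    have e1 : qint N ^ 2 * (2 - q ^ N) * inn d r k = (qint N ^ 2 * inn d r k) * (2 - q ^ N) := by ring
    unfold Cg
    rw [e1, inn_eq (EX_1q H.hn).ne]
    have := hh.neg
    convert this using 1
    have h2 : (q ^ N : RatFunc ℚ) ≠ 0 := zpow_ne_zero _ q_ne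
    unfold ep
    rw [zpow_neg]
    field_simp
    ring
  have c4 : DV n 4 _ := c2.trans c3
  have c5 : DV n 0 (tt d r k ^ 2) := (H.S.tt_dv H.hr H.hd k).pow0 2
  have c6 := (H.Rk_dv hk).mul (c5.mul c4 (by norm_num : (4:ℤ) ≤ _)) (by norm_num : (6:ℤ) ≤ _)
  convert c6 using 1
  rw [H.U, H.V]
  unfold Rk Q4 tt
  simp only [div_eq_mul_inv, mul_inv, mul_pow, inv_pow]
  ring
end main2

section main3
variable {n d a : ℕ} {r N : ℤ}

noncomputable def DD (d a : ℕ) (r N z : ℤ) : RatFunc ℚ :=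
  ∑ k ∈ range (a + 1), cc d r z k * (psi d r N k - psi d r 0 k) ^ 2

theorem DD_eq (z : ℤ) : DD d a r N z =
    FF d a r N N z - FF d a r N 0 z - FF d a r 0 N z + FF d a r 0 0 z := by
  unfold DD FF
  rw [← Finset.sum_sub_distrib, ← Finset.sum_sub_distrib, ← Finset.sum_add_distrib]
  exact Finset.sum_congr rfl fun k _ => by ring

theorem FF_comm (x y z : ℤ) : FF d a r x y z = FF d a r y x z :=
  Finset.sum_congr rfl fun k _ => by ring

theorem Main.uh2 (H : Main n d a r N) {k : ℕ} (hk : k ≤ a) : DV n 2 (uh d r N k - 1) := by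
  have := ((H.uhc hk).mono (by norm_num : (2:ℤ) ≤ 4))
  have := DV.add this ((DV_ep H.pos H.dvdN).mul (H.S1dv hk).neg (by norm_num : (2:ℤ) ≤ _))
  convert this using 1; ring

theorem Main.vh2 (H : Main n d a r N) {k : ℕ} (hk : k ≤ a) : DV n 2 (vh d N k - 1) := by
  have := ((H.vhc hk).mono (by norm_num : (2:ℤ) ≤ 4))
  have := DV.add this ((DV_ep H.pos H.dvdN).mul (H.S2dv hk) (by norm_num : (2:ℤ) ≤ _))
  convert this using 1; ring

theorem Main.dinv (H : Main n d a r N) {k : ℕ} (hk : k ≤ a) : DV n 0 ((PH d d k ^ 2)⁻¹) := by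
  have := ((H.S.ex2 (α := d) (by simp) (by have := H.lt; omega : k < n)).pow 2).inv
  exact this.dv (by norm_num)

theorem Main.part2 (H : Main n d a r N) : DV n 6 (DD d a r N (-N)) := by
  rw [DD_eq, H.F3 N N (by simp) (by simp), H.F3 N 0 (by simp) (by simp),
    H.F3 0 N (by simp) (by simp), H.F3 0 0 (by simp) (by simp),
    ← Finset.sum_sub_distrib, ← Finset.sum_sub_distrib, ← Finset.sum_add_distrib]
  refine DV.sum _ _ fun k hk => ?_
  have hk : k ≤ a := by have := Finset.mem_range.1 hk; omega
  have hlt := H.lt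
  have h2 := H.two_lt
  have p1 : DV n 2 (qint N * (PH d r a * PH d (d - r) a)) := by
    have e1 := H.S.exdr H.hr H.hd a
    rw [Nat.mod_eq_of_lt hlt, ind_pos (by omega), Nat.div_eq_of_lt hlt] at e1
    have e2 : EX n 0 (PH d r a) := H.S.ex1 (by simp) le_rfl
    exact (qint_dv1 H.hn H.dvdN).mul ((e2.mul e1).dv le_rfl) (by norm_num)
  have p2 : DV n 2 (uh d r N k * vh d N a - 1) := by
    have := ((H.uh2 hk).mul (H.vh0 le_rfl) (by norm_num : (2:ℤ) ≤ _)).add (H.vh2 (k := a) le_rfl)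
    convert this using 1; ring
  have p3 : DV n 0 ((PH d d a ^ 2)⁻¹ * PH d r k ^ 2 * (PH d d k ^ 2)⁻¹) :=
    ((H.dinv le_rfl).mul0 (((H.S.ex1 (α := r) (by simp) hk).dv le_rfl).pow0 2)).mul0 (H.dinv hk)
  have := (p1.mul (H.kap_dv hk) (by norm_num : (2:ℤ) ≤ _)).mul
    ((p2.mul (H.vh2 hk) (by norm_num : (4:ℤ) ≤ _)).mul p3 (by norm_num : (4:ℤ) ≤ _))
    (by norm_num : (6:ℤ) ≤ _)
  convert this using 1
  rw [H.U, H.V, H.V]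
  simp only [sub_zero, add_zero, ← pow_two]
  ring

noncomputable def Lk (d : ℕ) (r : ℤ) (k : ℕ) : RatFunc ℚ :=
  ∑ i ∈ range k, (1 + Aq (r + d * i) + Aq (d + d * i))

noncomputable def Tk (d : ℕ) (r : ℤ) (k : ℕ) : RatFunc ℚ := S1 d d k - S1 d r k

theorem Aq_neg {s : ℤ} (hs : s ≠ 0) : Aq (-s) = -1 - Aq s := by
  have h1 := osq_ne hs
  have h2 : (q ^ s : RatFunc ℚ) ≠ 0 := zpow_ne_zero _ q_ne
  have h3 : (1 - q ^ (-s) : RatFunc ℚ) ≠ 0 := osq_ne (by omega)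
  unfold Aq
  have h4 : q ^ (-s) / (1 - q ^ (-s)) = 1 / (q ^ s - 1) := by
    rw [zpow_neg] at h3 ⊢
    have : q ^ s - 1 ≠ 0 := by
      intro h; apply h1; linear_combination -h
    field_simp
  rw [h4]
  have : q ^ s - 1 ≠ 0 := by
    intro h; apply h1; linear_combination -h
  field_simp
  ring

theorem Bq_neg {s : ℤ} (hs : s ≠ 0) : Bq (-s) = Bq s := by
  have h1 := osq_ne hs
  have h2 : (q ^ s : RatFunc ℚ) ≠ 0 := zpow_ne_zero _ q_ne
  unfold Bq
  rw [one_sub_neg, zpow_neg]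
  field_simp

theorem Cg_Aq {m : ℕ} (hm : 0 < m) {s t : ℤ} (hs : ¬ (m:ℤ) ∣ s) (ht : ¬ (m:ℤ) ∣ t)
    (h : (m:ℤ) ∣ s + t) : DV m 1 (Aq s + Aq t + 1) := by
  have ht0 : t ≠ 0 := by rintro rfl; simp at ht
  have ht' : ¬ (m:ℤ) ∣ -t := fun h => ht ((dvd_neg).1 h)
  have h' : (m:ℤ) ∣ s - -t := dveq h (by ring)
  have c : Cg m 1 (Aq s) (Aq (-t)) :=
    Cg_div (Cg_zpow hm _ _ h') (Cg_one_sub hm _ _ h') (dvq hm _) (EX_unit hm _ hs) (EX_unit hm _ ht')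
  unfold Cg at c
  rw [Aq_neg ht0] at c
  convert c using 1; ring

theorem Cg_Bq {m : ℕ} (hm : 0 < m) {s t : ℤ} (hs : ¬ (m:ℤ) ∣ s) (ht : ¬ (m:ℤ) ∣ t)
    (h : (m:ℤ) ∣ s + t) : DV m 1 (Bq s - Bq t) := by
  have ht0 : t ≠ 0 := by rintro rfl; simp at ht
  have ht' : ¬ (m:ℤ) ∣ -t := fun h => ht ((dvd_neg).1 h)
  have h' : (m:ℤ) ∣ s - -t := dveq h (by ring)
  have c : Cg m 1 (Bq s) (Bq (-t)) :=
    Cg_div (Cg_zpow hm _ _ h') ((Cg_one_sub hm _ _ h').pow (dv1q hm _) (dv1q hm _) 2) (dvq hm _)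
      (by simpa using (EX_unit hm _ hs).pow 2) (by simpa using (EX_unit hm _ ht').pow 2)
  unfold Cg at c
  rwa [Bq_neg ht0] at c

theorem Main.Lsym (H : Main n d a r N) (k : ℕ) (hk : k ≤ a) :
    Cg n 1 (Lk d r (a - k)) (Lk d r k) := by
  refine step_symm _ (fun k b hkb => ?_) k hk
  have h := H.S.hdvd
  rw [← hkb] at h
  push_cast at h
  have h1 := Cg_Aq H.pos (H.nr (k := b + 1) (i := b) (by omega) (by omega))
    (H.nd (k := k + 1) (i := k) (by omega) (by omega)) (dveq h (by ring))
  have h2 := Cg_Aq H.pos (H.nd (k := b + 1) (i := b) (by omega) (by omega))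
    (H.nr (k := k + 1) (i := k) (by omega) (by omega)) (dveq h (by ring))
  have := h1.add h2
  unfold Lk
  rw [Finset.sum_range_succ, Finset.sum_range_succ]
  convert this using 1; ring

theorem Main.Tsym (H : Main n d a r N) (k : ℕ) (hk : k ≤ a) :
    Cg n 1 (Tk d r (a - k)) (Tk d r k) := by
  refine step_symm _ (fun k b hkb => ?_) k hk
  have h := H.S.hdvd
  rw [← hkb] at h
  push_cast at h
  have h1 := Cg_Bq H.pos (H.nr (k := b + 1) (i := b) (by omega) (by omega))
    (H.nd (k := k + 1) (i := k) (by omega) (by omega)) (dveq h (by ring))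
  have h2 := Cg_Bq H.pos (H.nd (k := b + 1) (i := b) (by omega) (by omega))
    (H.nr (k := k + 1) (i := k) (by omega) (by omega)) (dveq h (by ring))
  have := h2.sub h1
  unfold Tk S1
  rw [Finset.sum_range_succ, Finset.sum_range_succ, Finset.sum_range_succ, Finset.sum_range_succ]
  convert this using 1; ring

theorem Main.Ldv (H : Main n d a r N) {k : ℕ} (hk : k ≤ a) : DV n 0 (Lk d r k) :=
  DV.sum _ _ fun _ hi => ((DV.one n).add (DV_Aq H.pos (H.nr hk (Finset.mem_range.1 hi)))).add
    (DV_Aq H.pos (H.nd hk (Finset.mem_range.1 hi)))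

theorem Main.Tdv (H : Main n d a r N) {k : ℕ} (hk : k ≤ a) : DV n 0 (Tk d r k) :=
  (H.S2dv hk).sub (H.S1dv hk)

theorem Main.taudv (H : Main n d a r N) (k : ℕ) : DV n 0 (tau d r k) :=
  ((DV_qint H.hn _).mul0 ((H.S.tt_dv H.hr H.hd k).pow0 6)).mul0 (dvq H.pos _)

theorem Main.anti (H : Main n d a r N) :
    DV n 1 (∑ k ∈ range (a + 1), tau d r k * Lk d r k * Tk d r k ^ 2) := by
  refine anti_sum _ fun k hk => ?_
  have hk' : a - k ≤ a := by omega
  have := ((H.S.tau_symm hk).mul (H.Lsym k hk) (H.taudv _) (H.Ldv hk)).mul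
    ((H.Tsym k hk).pow (H.Tdv hk') (H.Tdv hk) 2) ((H.taudv _).mul0 (H.Ldv hk')) ((H.Tdv hk).pow0 2)
  convert this using 1; ring

theorem ph0 (k : ℕ) : ph d r 0 k = tt d r k := by simp [ph, tt]

theorem cc0 (k : ℕ) : cc d r 0 k * psi d r 0 k ^ 2 = tau d r k := by
  unfold cc psi tau
  rw [neg_zero, ph0, sub_zero]; ring

theorem Main.psi_eq (H : Main n d a r N) (k : ℕ) :
    psi d r N k = psi d r 0 k * (uh d r N k * vh d N k) := by
  have h1 := H.U k
  have h2 := H.V k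
  unfold psi
  rw [neg_zero, ph0]
  have : ph d r N k * ph d r (-N) k = (PH d (r + N) k * PH d (r - N) k) *
    (PH d (d - N) k * PH d (d + N) k)⁻¹ := by
    unfold ph
    rw [sub_neg_eq_add, ← sub_eq_add_neg, mul_inv]; ring
  rw [this, h1, h2]
  unfold tt
  rw [div_eq_mul_inv, ← inv_pow]; ring

theorem fac1 (N : ℤ) {s : ℤ} (hs : s ≠ 0) :
    (1 - q ^ (s - N) : RatFunc ℚ) = (1 - q ^ s) * (1 + (q ^ N - 1) * (q ^ (-N) * Aq s)) := by
  have h1 := osq_ne hs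
  have h2 : (q ^ N : RatFunc ℚ) ≠ 0 := zpow_ne_zero _ q_ne
  unfold Aq
  rw [zpow_sub₀ q_ne, zpow_neg]
  field_simp
  ring

theorem fac1' (N : ℤ) {s : ℤ} (hs : s ≠ 0) :
    (1 - q ^ (s + N) : RatFunc ℚ) = (1 - q ^ s) * (1 - (q ^ N - 1) * Aq s) := by
  have h1 := osq_ne hs
  unfold Aq
  rw [zpow_add₀ q_ne]
  field_simp
  ring

/-- the ratio of `cc` at `-N` and `0` -/
noncomputable def wk (d : ℕ) (r N : ℤ) (k : ℕ) : RatFunc ℚ :=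
  ∏ i ∈ range k, ((1 + (q ^ N - 1) * (q ^ (-N) * Aq (r + d * i))) *
    (1 - (q ^ N - 1) * Aq (d + d * i))⁻¹ * q ^ N)

theorem Main.cc_eq (H : Main n d a r N) (k : ℕ) : cc d r (-N) k = cc d r 0 k * wk d r N k := by
  unfold cc wk
  rw [Finset.prod_mul_distrib, Finset.prod_mul_distrib, Finset.prod_const, Finset.card_range,
    Finset.prod_inv_distrib]
  have e1 : PH d (r + -N) k = PH d r k *
      ∏ i ∈ range k, (1 + (q ^ N - 1) * (q ^ (-N) * Aq (r + d * i))) := by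
    unfold PH
    rw [← Finset.prod_mul_distrib]
    refine Finset.prod_congr rfl fun i _ => ?_
    rw [← fac1 N (ne_rd H.hr H.hd i)]; congr 2; ring
  have e2 : PH d (d - -N) k = PH d d k *
      ∏ i ∈ range k, (1 - (q ^ N - 1) * Aq (d + d * i)) := by
    unfold PH
    rw [← Finset.prod_mul_distrib]
    refine Finset.prod_congr rfl fun i _ => ?_
    rw [← fac1' N (ne_dd H.hd i)]; congr 2; ring
  have e3 : (q ^ ((2 * (d:ℤ) - 3 * r - -N) * k) : RatFunc ℚ) =
      q ^ ((2 * (d:ℤ) - 3 * r - 0) * k) * (q ^ N) ^ k := by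
    rw [← zpow_natCast (q ^ N), ← zpow_mul, ← zpow_add₀ q_ne]; congr 1; ring
  rw [e3, ph0]
  unfold ph tt
  rw [e1, e2]
  simp only [div_eq_mul_inv, mul_inv]
  ring

theorem Main.wkc (H : Main n d a r N) {k : ℕ} (hk : k ≤ a) :
    Cg n 2 (wk d r N k) (1 + (q ^ N - 1) * Lk d r k) := by
  have hn := H.pos
  have hδ : DV n 1 (q ^ N - 1) := by
    have := (DV_one_sub hn N H.dvdN).neg
    simpa using this
  refine lin_prod (by norm_num : (0:ℤ) ≤ 1) (by norm_num) (by norm_num) hδ k _ _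
    (fun i hi => ((DV.one n).add (DV_Aq hn (H.nr hk hi))).add (DV_Aq hn (H.nd hk hi))) fun i hi => ?_
  have a1 := DV_Aq hn (H.nr hk hi)
  have a2 := DV_Aq hn (H.nd hk hi)
  have s1 : Cg n 2 (1 + (q ^ N - 1) * (q ^ (-N) * Aq (r + d * i)))
      (1 + (q ^ N - 1) * Aq (r + d * i)) := by
    have := ((hδ.mul hδ (by norm_num : (2:ℤ) ≤ _)).mul ((dvq hn (-N)).mul0 a1)
      (by norm_num : (2:ℤ) ≤ _)).neg
    unfold Cg
    convert this using 1
    have h2 : (q ^ N : RatFunc ℚ) ≠ 0 := zpow_ne_zero _ q_ne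
    rw [zpow_neg]
    field_simp
    ring
  have ne := ne_dd H.hd i
  have s2 : EX n 0 (1 - (q ^ N - 1) * Aq (d + d * i)) := by
    have h1 := EX_unit hn ((d + d * i : ℤ) + N) fun h' => H.nd hk hi (dveq (dvd_sub h' H.dvdN) (by ring))
    have h3 := h1.div (EX_unit hn _ (H.nd hk hi))
    rw [fac1' N ne, mul_div_cancel_left₀ _ (osq_ne ne)] at h3
    simpa using h3
  have s3 := lin_inv (by norm_num : (2:ℤ) ≤ _) hδ a2 s2
  have s4 : Cg n 2 (q ^ N) (1 + (q ^ N - 1) * 1) := by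
    have := Cg.refl n 2 (q ^ N)
    convert this using 1; ring
  have := lin_mul (by norm_num) (by norm_num) (by norm_num) hδ (a1.add a2) (DV.one n)
    (lin_mul (by norm_num) (by norm_num) (by norm_num) hδ a1 a2 s1 s3) s4
  convert this using 1; ring

theorem Main.part3 (H : Main n d a r N) : DV n 6 (DD d a r N 0 - DD d a r N (-N)) := by
  have hn := H.pos
  have hδ : DV n 1 (q ^ N - 1) := by
    have := (DV_one_sub hn N H.dvdN).neg
    simpa using this
  have hε := DV_ep hn H.dvdN
  have key : Cg n 6 (DD d a r N 0 - DD d a r N (-N))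
      (∑ k ∈ range (a + 1), (- ((q ^ N - 1) * ep N ^ 2)) * (tau d r k * Lk d r k * Tk d r k ^ 2)) := by
    unfold DD
    rw [← Finset.sum_sub_distrib]
    refine Cg.sum _ _ _ fun k hk => ?_
    have hk : k ≤ a := by have := Finset.mem_range.1 hk; omega
    rw [H.cc_eq, H.psi_eq, ← cc0]
    have ttd := H.S.tt_dv H.hr H.hd k
    have hc : DV n 0 (cc d r 0 k * psi d r 0 k ^ 2) := by rw [cc0]; exact H.taudv k
    have huv := lin_mul (by norm_num) (by norm_num) (by norm_num) hε (H.S1dv hk).neg (H.S2dv hk)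
      (H.uhc hk) (H.vhc hk)
    have hX4 : DV n 4 (uh d r N k * vh d N k - 1 - ep N * Tk d r k) := by
      have : DV n 4 _ := huv
      convert this using 1; unfold Tk; ring
    have hY2 : DV n 2 (ep N * Tk d r k) := hε.mul (H.Tdv hk) (by norm_num)
    have hX2 : DV n 2 (uh d r N k * vh d N k - 1) := by
      have := (hX4.mono (by norm_num : (2:ℤ) ≤ 4)).add hY2
      convert this using 1; ring
    have hsq : DV n 6 ((uh d r N k * vh d N k - 1) ^ 2 - (ep N * Tk d r k) ^ 2) := by
      have := hX4.mul (hX2.add hY2) (by norm_num : (6:ℤ) ≤ _)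
      convert this using 1; ring
    have hw : DV n 2 (wk d r N k - (1 + (q ^ N - 1) * Lk d r k)) := H.wkc hk
    have hL1 : DV n 0 ((q ^ N - 1) * Lk d r k) := (hδ.mul (H.Ldv hk) (by norm_num : (0:ℤ) ≤ _))
    have hX4' : DV n 4 ((uh d r N k * vh d N k - 1) ^ 2) := (hX2.pow 2).mono (by norm_num)
    have t1 := hc.mul (hw.mul hX4' (by norm_num : (6:ℤ) ≤ _)) (by norm_num : (6:ℤ) ≤ _)
    have t2 := hc.mul (hL1.mul hsq (by norm_num : (6:ℤ) ≤ _)) (by norm_num : (6:ℤ) ≤ _)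
    have := (t1.add t2).neg
    unfold Cg
    convert this using 1
    ring
  refine key.dv ?_
  rw [← Finset.mul_sum]
  exact (hδ.mul (hε.pow 2) (by norm_num : (5:ℤ) ≤ _)).neg.mul H.anti (by norm_num)

theorem Main.top (H : Main n d a r N) :
    DV n 6 (∑ k ∈ range (a + 1), tau d r k - Rs d a r N) := by
  have h0 : ∑ k ∈ range (a + 1), tau d r k = FF d a r 0 0 0 := by
    refine Finset.sum_congr rfl fun k _ => ?_
    rw [← cc0]; ring
  have h1 := DD_eq (d := d) (a := a) (r := r) (N := N) 0
  rw [FF_comm 0 N] at h1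
  have := (H.part1.add H.part3).add H.part2
  rw [h0]
  convert this using 1
  rw [h1]; ring
end main3

section fin
variable {n d a : ℕ} {r N : ℤ}

theorem Main.low (H : Main n d a r N) {m : ℕ} (hmn : m ∣ n) (hm : 1 < m) :
    Setup m d (a % m) r ∧ (m:ℤ) ∣ N := by
  have h1 : (m:ℤ) ∣ N := (Int.natCast_dvd_natCast.2 hmn).trans H.dvdN
  refine ⟨⟨hm, H.cop.coprime_dvd_left hmn, Nat.mod_lt _ (by omega), ?_⟩, h1⟩
  rw [H.hN] at h1
  have h2 : ((a % m : ℕ) : ℤ) + (m:ℤ) * (a / m : ℕ) = a := by exact_mod_cast Nat.mod_add_div a m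
  obtain ⟨c, hc⟩ := h1
  exact ⟨c - d * (a / m : ℕ), by linear_combination hc + d * h2⟩

theorem inn_Icc (d : ℕ) (r : ℤ) (k : ℕ) :
    ∑ j ∈ Finset.Icc 1 k,
              (q ^ ((d : ℤ) * j) / qint ((d : ℤ) * j) ^ 2 +
                q ^ ((d : ℤ) * j - d + r) / qint ((d : ℤ) * j - d + r) ^ 2) = inn d r k := by
  have : Finset.Icc 1 k = Finset.Ico 1 (k + 1) := by ext x; simp
  rw [this, Finset.sum_Ico_eq_sum_range]
  unfold inn
  refine Finset.sum_congr rfl fun i _ => ?_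
  have e1 : (d:ℤ) * ((1 + i : ℕ) : ℤ) = d + d * i := by push_cast; ring
  have e2 : (d:ℤ) + d * i - d + r = r + d * i := by ring
  rw [e1, e2]

theorem Main.final (H : Main n d a r N) (M : ℕ) (hM : M = a ∨ M = n - 1) :
    qcong (∑ k ∈ range (M + 1), tau d r k) (Rs d a r N)
      ((∑ i ∈ Finset.range n, Polynomial.X ^ i) * Polynomial.cyclotomic n ℚ ^ 5) := by
  have hlt := H.lt
  apply combine n H.hn
  · rcases hM with rfl | rfl
    · exact H.top
    · obtain ⟨b, hb⟩ : ∃ b, n - 1 + 1 = (a + 1) + b := ⟨n - (a+1), by omega⟩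
      rw [hb, Finset.sum_range_add]
      have h2 : DV n 6 (∑ x ∈ range b, tau d r (a + 1 + x)) := DV.sum _ _ fun i hi => by
        have := Finset.mem_range.1 hi
        exact H.S.tau_hi H.hr H.hd _ (by omega) (by omega)
      have := H.top.add h2
      convert this using 1; ring
  · intro m hmn hm _
    obtain ⟨S, hN⟩ := H.low hmn hm
    have ea : a / m * m + a % m = a := Nat.div_add_mod' a m
    refine DV.sub ?_ ?_
    · rcases hM with rfl | rfl
      · have := S.tau_sumua H.hr H.hd (M / m)
        rwa [ea] at this
      · obtain ⟨c, hc⟩ := hmn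
        have := S.tau_sumu H.hr H.hd c
        have e : n - 1 + 1 = c * m := by rw [mul_comm, ← hc]; omega
        rwa [e]
    · have := S.Rs_dv H.hr H.hd (a / m) hN
      rwa [ea] at this
end fin

theorem stmt12 (n d : ℕ) (r : ℤ) (hr : r = 1 ∨ r = -1)
    (hnd : (d : ℤ) ≤ (n : ℤ) + r) (hd : 3 ≤ d) (hgcd : Nat.gcd n d = 1)
    (hmod : (n : ℤ) ≡ -r [ZMOD (d : ℤ)])
    (m₀ : ℕ) (hm₀ : (m₀ : ℤ) * d = (d : ℤ) * n - n - r)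
    (M : ℕ) (hM : M = m₀ ∨ M = n - 1) :
    qcong
      (∑ k ∈ Finset.range (M + 1),
        qint (2 * d * k + r) * (qpoch (q ^ r) (q ^ d) k ^ 6 / qpoch (q ^ d) (q ^ d) k ^ 6) *
          q ^ ((2 * (d : ℤ) - 3 * r) * k))
      (qint ((d : ℤ) * n - n) * q ^ ((r * (r + (n : ℤ) - d * n)) / d) *
        (qpoch (q ^ (2 * r)) (q ^ d) m₀ / qpoch (q ^ d) (q ^ d) m₀) *
        ∑ k ∈ Finset.range (m₀ + 1),
          (qpoch (q ^ r) (q ^ d) k ^ 3 * qpoch (q ^ ((d : ℤ) - r)) (q ^ d) k * q ^ (d * k) /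
            (qpoch (q ^ d) (q ^ d) k ^ 3 * qpoch (q ^ (2 * r)) (q ^ d) k)) *
          (1 - qint ((d : ℤ) * n - n) ^ 2 * (2 - q ^ ((d : ℤ) * n - n)) *
            ∑ j ∈ Finset.Icc 1 k,
              (q ^ ((d : ℤ) * j) / qint ((d : ℤ) * j) ^ 2 +
                q ^ ((d : ℤ) * j - d + r) / qint ((d : ℤ) * j - d + r) ^ 2)))
      ((∑ i ∈ Finset.range n, Polynomial.X ^ i) * Polynomial.cyclotomic n ℚ ^ 5) := by
  have hn : 1 < n := by rcases hr with rfl | rfl <;> omega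
  have H : Main n d m₀ r ((d:ℤ) * n - n) :=
    ⟨hr, hd, hn, hgcd, by linarith, rfl⟩
  have key := H.final M hM
  have ep : ∀ k, qpoch (q ^ d) (q ^ d) k = PH d d k := by
    intro k
    have := qpoch_eq d d k
    rwa [zpow_natCast] at this
  have hd0 : (d:ℤ) ≠ 0 := by omega
  have ee : (r * (r + (n : ℤ) - d * n)) / d = -r * m₀ := by
    have : r * (r + (n : ℤ) - d * n) = (-r * m₀) * d := by linear_combination r * hm₀
    rw [this, Int.mul_ediv_cancel _ hd0]
  have e1 : ∑ k ∈ Finset.range (M + 1),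
        qint (2 * d * k + r) * (qpoch (q ^ r) (q ^ d) k ^ 6 / qpoch (q ^ d) (q ^ d) k ^ 6) *
          q ^ ((2 * (d : ℤ) - 3 * r) * k) = ∑ k ∈ range (M + 1), tau d r k := by
    refine Finset.sum_congr rfl fun k _ => ?_
    rw [qpoch_eq, ep, ← div_pow]
    rfl
  rw [e1, ee]
  convert key using 1
  unfold Rs
  rw [qpoch_eq, ep]
  congr 1
  refine Finset.sum_congr rfl fun k _ => ?_
  rw [inn_Icc, qpoch_eq, qpoch_eq, qpoch_eq, ep]
  unfold Q4
  congr 4
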